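/- For every architecture A, finite alphabet Σ, and k ≥ 1, there exists a nondeterministic bottom-up tree automaton A_cbm^{k-stw} that accepts a binary tree τ over Λ^k if and only if τ is a valid k-STT, the coloring χ_τ has empty domain, and G_τ is a CBM over (A,Σ); moreover its number of states can be bounded by 2^{c·k²·(|Procs|+|DS|)} for a constant c independent of A, Σ, and k. -/

import Mathlib

/-! ### Architectures and concurrent behaviors with matching (CBMs) -/

/-- The three kinds of data structures. -/
inductive DSKind : Type
  | stack
  | queue
  | bag
deriving DecidableEq

/-- An architecture: a finite set of processes, a finite set of data structures
(each a stack, queue, or bag), with writer and reader processes; stacks are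
written and read by the same process. -/
structure Architecture where
  Procs : Type
  DS : Type
  procsFintype : Fintype Procs
  dsFintype : Fintype DS
  procsDecEq : DecidableEq Procs
  dsDecEq : DecidableEq DS
  kind : DS → DSKind
  Writer : DS → Procs
  Reader : DS → Procs
  stack_wr : ∀ d, kind d = DSKind.stack → Writer d = Reader d

attribute [instance] Architecture.procsFintype Architecture.dsFintype
  Architecture.procsDecEq Architecture.dsDecEq

/-- Potential events: a process together with a (1-based) position. -/
abbrev Architecture.Event (A : Architecture) : Type := A.Procs × ℕ

/-- The data of a CBM: one word per process and one matching relation per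
data structure (on potential events). -/
structure PreCBM (A : Architecture) (Alph : Type) where
  word : A.Procs → List Alph
  mrel : A.DS → A.Event → A.Event → Prop

namespace PreCBM

variable {A : Architecture} {Alph : Type}

/-- `(p,i)` is an event iff `1 ≤ i ≤ |w_p|`. -/
def isEvent (M : PreCBM A Alph) (e : A.Event) : Prop :=
  1 ≤ e.2 ∧ e.2 ≤ (M.word e.1).length

/-- The set of events of `M`. -/
def events (M : PreCBM A Alph) : Set A.Event := {e | M.isEvent e}

/-- The label of event `(p,i)` is the `i`-th letter of `w_p`. -/
def label (M : PreCBM A Alph) (e : A.Event) : Option Alph :=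
  (M.word e.1)[e.2 - 1]?

/-- Process-successor relation `(p,i) → (p,i+1)`. -/
def procSucc (M : PreCBM A Alph) (e f : A.Event) : Prop :=
  M.isEvent e ∧ M.isEvent f ∧ f.1 = e.1 ∧ f.2 = e.2 + 1

/-- `e ▷ f` for some data structure. -/
def mat (M : PreCBM A Alph) (e f : A.Event) : Prop := ∃ d, M.mrel d e f

def step (M : PreCBM A Alph) (e f : A.Event) : Prop := M.procSucc e f ∨ M.mat e f

/-- The causal order `< = (→ ∪ ▷)⁺`. -/
def lt (M : PreCBM A Alph) : A.Event → A.Event → Prop := Relation.TransGen M.step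

/-- An event is internal if it is not the endpoint of any matching edge. -/
def isInternal (M : PreCBM A Alph) (e : A.Event) : Prop :=
  ¬ ∃ d f, M.mrel d e f ∨ M.mrel d f e

/-- The CBM axioms. -/
structure IsCBM (M : PreCBM A Alph) : Prop where
  mrel_valid : ∀ d e f, M.mrel d e f →
    M.isEvent e ∧ M.isEvent f ∧ e.1 = A.Writer d ∧ f.1 = A.Reader d
  disjoint : ∀ d d' e f e' f', M.mrel d e f → M.mrel d' e' f' →
    ¬ (d = d' ∧ e = e' ∧ f = f') → e ≠ e' ∧ e ≠ f' ∧ f ≠ e' ∧ f ≠ f'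
  irrefl : ∀ e, ¬ M.lt e e
  lifo : ∀ d, A.kind d = DSKind.stack → ∀ e₁ f₁ e₂ f₂,
    M.mrel d e₁ f₁ → M.mrel d e₂ f₂ → M.lt e₁ e₂ → M.lt e₂ f₁ → M.lt f₂ f₁
  fifo : ∀ d, A.kind d = DSKind.queue → ∀ e₁ f₁ e₂ f₂,
    M.mrel d e₁ f₁ → M.mrel d e₂ f₂ → M.lt e₁ e₂ → M.lt f₁ f₂

end PreCBM

/-- Concurrent behaviors with matching over `(A, Alph)`. -/
def CBM (A : Architecture) (Alph : Type) : Type := {M : PreCBM A Alph // M.IsCBM}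
/-! ### Monadic second-order logic over vertex- and edge-labeled structures -/

/-- MSO formulas over structures with vertex labels `Vl` and binary relations
indexed by `El`.  First-order variables and set variables are indexed by `ℕ`. -/
inductive GMSO (Vl El : Type) : Type
  | lab (a : Vl) (x : ℕ)
  | edge (γ : El) (x y : ℕ)
  | eq (x y : ℕ)
  | mem (x X : ℕ)
  | or (φ ψ : GMSO Vl El)
  | not (φ : GMSO Vl El)
  | exFO (x : ℕ) (φ : GMSO Vl El)
  | exSO (X : ℕ) (φ : GMSO Vl El)

namespace GMSO

variable {Vl El : Type} {V : Type}

/-- Satisfaction of an MSO formula in a structure with domain `dom`, labeling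
relation `lab` and edge relations `edge`, under valuations `ν` (first-order,
partial) and `μ` (second-order). -/
def Sat (dom : Set V) (lab : V → Vl → Prop) (edge : El → V → V → Prop) :
    (ℕ → Option V) → (ℕ → Set V) → GMSO Vl El → Prop
  | ν, _, .lab a x => ∃ v, ν x = some v ∧ v ∈ dom ∧ lab v a
  | ν, _, .edge γ x y => ∃ u v, ν x = some u ∧ ν y = some v ∧ edge γ u v
  | ν, _, .eq x y => ∃ v, ν x = some v ∧ ν y = some v
  | ν, μ, .mem x X => ∃ v, ν x = some v ∧ v ∈ μ X
  | ν, μ, .or φ ψ => Sat dom lab edge ν μ φ ∨ Sat dom lab edge ν μ ψ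
  | ν, μ, .not φ => ¬ Sat dom lab edge ν μ φ
  | ν, μ, .exFO x φ => ∃ v ∈ dom, Sat dom lab edge (Function.update ν x (some v)) μ φ
  | ν, μ, .exSO X φ => ∃ E : Set V, E ⊆ dom ∧ Sat dom lab edge ν (Function.update μ X E) φ

/-- Free first-order variables. -/
def freeFO : GMSO Vl El → Set ℕ
  | .lab _ x => {x}
  | .edge _ x y => {x, y}
  | .eq x y => {x, y}
  | .mem x _ => {x}
  | .or φ ψ => freeFO φ ∪ freeFO ψ
  | .not φ => freeFO φ
  | .exFO x φ => freeFO φ \ {x}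
  | .exSO _ φ => freeFO φ

/-- Free second-order variables. -/
def freeSO : GMSO Vl El → Set ℕ
  | .lab _ _ => ∅
  | .edge _ _ _ => ∅
  | .eq _ _ => ∅
  | .mem _ X => {X}
  | .or φ ψ => freeSO φ ∪ freeSO ψ
  | .not φ => freeSO φ
  | .exFO _ φ => freeSO φ
  | .exSO X φ => freeSO φ \ {X}

/-- A sentence is a formula without free variables. -/
def Closed (φ : GMSO Vl El) : Prop := freeFO φ = ∅ ∧ freeSO φ = ∅

/-- Satisfaction of a sentence (valuations are irrelevant for sentences). -/
def Models (dom : Set V) (lab : V → Vl → Prop) (edge : El → V → V → Prop)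
    (φ : GMSO Vl El) : Prop :=
  Sat dom lab edge (fun _ => none) (fun _ => ∅) φ

/-- First-order formulas: no second-order quantification. -/
def FirstOrder : GMSO Vl El → Prop
  | .or φ ψ => FirstOrder φ ∧ FirstOrder ψ
  | .not φ => FirstOrder φ
  | .exFO _ φ => FirstOrder φ
  | .exSO _ _ => False
  | _ => True

/-- EMSO formulas: a block of existential second-order quantifiers followed by a
first-order formula. -/
inductive IsEMSO : GMSO Vl El → Prop
  | fo {φ : GMSO Vl El} : FirstOrder φ → IsEMSO φ
  | ex {X : ℕ} {φ : GMSO Vl El} : IsEMSO φ → IsEMSO (.exSO X φ)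

end GMSO
/-! ### Labeled binary trees (with unary nodes) and MSO over them -/

/-- Λ-labeled trees in which every node has 0, 1, or 2 children. -/
inductive BTree (Λ : Type) : Type
  | leaf (l : Λ)
  | unary (l : Λ) (t : BTree Λ)
  | binary (l : Λ) (t₁ t₂ : BTree Λ)

namespace BTree

variable {Λ : Type}

/-- The label at a position (a path from the root; `false` = child 0,
`true` = child 1), if the position exists. -/
def labelAt : BTree Λ → List Bool → Option Λ
  | .leaf l, [] => some l
  | .unary l _, [] => some l
  | .binary l _ _, [] => some l
  | .unary _ t, false :: p => t.labelAt p
  | .binary _ t₁ _, false :: p => t₁.labelAt p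
  | .binary _ _ t₂, true :: p => t₂.labelAt p
  | _, _ => none

/-- The set of node positions of a tree. -/
def positions (t : BTree Λ) : Set (List Bool) := {p | (t.labelAt p).isSome}

/-- The `b`-child relation (`b = false`: child 0, `b = true`: child 1). -/
def childRel (t : BTree Λ) (b : Bool) (p q : List Bool) : Prop :=
  q = p ++ [b] ∧ q ∈ t.positions

/-- Satisfaction of an MSO sentence over the tree (atoms: labels, `↓0`, `↓1`). -/
def TSat (t : BTree Λ) (φ : GMSO Λ Bool) : Prop :=
  GMSO.Models t.positions (fun p l => t.labelAt p = some l) t.childRel φ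

end BTree
/-! ### Special tree terms (STTs) and their graph semantics -/

/-- Special tree terms over vertex labels `Vl` and edge labels `El`,
with colors in `ℕ`. -/
inductive STT (Vl El : Type) : Type
  | atom (i : ℕ) (a : Vl)
  | add (γ : El) (i j : ℕ) (τ : STT Vl El)
  | forget (i : ℕ) (τ : STT Vl El)
  | plus (τ₁ τ₂ : STT Vl El)

namespace STT

variable {Vl El : Type}

/-- The active colors of a term. -/
def activeColors : STT Vl El → Set ℕ
  | .atom i _ => {i}
  | .add _ _ _ τ => τ.activeColors
  | .forget i τ => τ.activeColors \ {i}
  | .plus τ₁ τ₂ => τ₁.activeColors ∪ τ₂.activeColors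

/-- Valid `k`-STTs: colors in `[k] = {1,…,k}`, and the two arguments of `⊕`
have disjoint sets of active colors. -/
def Valid (k : ℕ) : STT Vl El → Prop
  | .atom i _ => 1 ≤ i ∧ i ≤ k
  | .add _ i j τ => 1 ≤ i ∧ i ≤ k ∧ 1 ≤ j ∧ j ≤ k ∧ τ.Valid k
  | .forget i τ => 1 ≤ i ∧ i ≤ k ∧ τ.Valid k
  | .plus τ₁ τ₂ => τ₁.Valid k ∧ τ₂.Valid k ∧ Disjoint τ₁.activeColors τ₂.activeColors

/-- The (partial, injective) coloring `χ_τ`, mapping a color to the position of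
the vertex currently carrying it.  Vertices are identified with the positions
of the atoms in the term (`false` = unique/left child, `true` = right child). -/
def chi : STT Vl El → ℕ → Option (List Bool)
  | .atom i _, j => if j = i then some [] else none
  | .add _ _ _ τ, j => (τ.chi j).map (false :: ·)
  | .forget i τ, j => if j = i then none else (τ.chi j).map (false :: ·)
  | .plus τ₁ τ₂, j =>
      match τ₁.chi j with
      | some p => some (false :: p)
      | none => (τ₂.chi j).map (true :: ·)

/-- The label of a vertex (i.e., of an atom position) of `G_τ`. -/
def vlabel : STT Vl El → List Bool → Option Vl
  | .atom _ a, [] => some a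
  | .add _ _ _ τ, false :: p => τ.vlabel p
  | .forget _ τ, false :: p => τ.vlabel p
  | .plus τ₁ _, false :: p => τ₁.vlabel p
  | .plus _ τ₂, true :: p => τ₂.vlabel p
  | _, _ => none

/-- The vertex set of `G_τ`. -/
def vertices (τ : STT Vl El) : Set (List Bool) := {p | (τ.vlabel p).isSome}

/-- The `γ`-labeled edge relation of `G_τ`. -/
def edgeRel : STT Vl El → El → List Bool → List Bool → Prop
  | .atom _ _, _, _, _ => False
  | .add γ' i j τ, γ, u, v =>
      (∃ u' v', u = false :: u' ∧ v = false :: v' ∧ τ.edgeRel γ u' v') ∨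
      (γ = γ' ∧ ∃ pu pv, τ.chi i = some pu ∧ τ.chi j = some pv ∧
        u = false :: pu ∧ v = false :: pv)
  | .forget _ τ, γ, u, v => ∃ u' v', u = false :: u' ∧ v = false :: v' ∧ τ.edgeRel γ u' v'
  | .plus τ₁ τ₂, γ, u, v =>
      (∃ u' v', u = false :: u' ∧ v = false :: v' ∧ τ₁.edgeRel γ u' v') ∨
      (∃ u' v', u = true :: u' ∧ v = true :: v' ∧ τ₂.edgeRel γ u' v')

/-- `G_τ` is acyclic: the union of all edge relations has an irreflexive
transitive closure. -/
def Acyclic (τ : STT Vl El) : Prop :=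
  ∀ p, ¬ Relation.TransGen (fun u v => ∃ γ, τ.edgeRel γ u v) p p

/-- Satisfaction of a graph-MSO sentence in the graph `G_τ`. -/
def graphSat (τ : STT Vl El) (φ : GMSO Vl El) : Prop :=
  GMSO.Models τ.vertices (fun p a => τ.vlabel p = some a) τ.edgeRel φ

end STT

/-- The label alphabet `Λ^k` of `k`-STTs, seen as labeled binary trees. -/
inductive STTLabel (Vl El : Type) : Type
  | atom (i : ℕ) (a : Vl)
  | add (γ : El) (i j : ℕ)
  | forget (i : ℕ)
  | plus

/-- The binary tree underlying a special tree term. -/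
def STT.toTree {Vl El : Type} : STT Vl El → BTree (STTLabel Vl El)
  | .atom i a => .leaf (.atom i a)
  | .add γ i j τ => .unary (.add γ i j) τ.toTree
  | .forget i τ => .unary (.forget i) τ.toTree
  | .plus τ₁ τ₂ => .binary .plus τ₁.toTree τ₂.toTree
/-! ### Bottom-up tree automata -/

/-- A (nondeterministic) bottom-up tree automaton over `Λ`-labeled trees with
nodes of arity 0, 1 or 2. -/
structure BUTA (Λ : Type) where
  State : Type
  stFintype : Fintype State
  leafT : Λ → State → Prop
  unaryT : Λ → State → State → Prop
  binaryT : Λ → State → State → State → Prop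
  accept : State → Prop

namespace BUTA

variable {Λ : Type}

/-- Bottom-up runs: the state assigned at the root of the given tree. -/
inductive Runs (Aut : BUTA Λ) : BTree Λ → Aut.State → Prop
  | leaf {l s} : Aut.leafT l s → Runs Aut (.leaf l) s
  | unary {l t s' s} : Aut.unaryT l s' s → Runs Aut t s' → Runs Aut (.unary l t) s
  | binary {l t₁ t₂ s₁ s₂ s} : Aut.binaryT l s₁ s₂ s →
      Runs Aut t₁ s₁ → Runs Aut t₂ s₂ → Runs Aut (.binary l t₁ t₂) s

/-- Acceptance: some run reaching an accepting state at the root. -/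
def Accepts (Aut : BUTA Λ) (t : BTree Λ) : Prop := ∃ s, Aut.Runs t s ∧ Aut.accept s

/-- Determinism: the transition relations are partial functions. -/
def Deterministic (Aut : BUTA Λ) : Prop :=
  (∀ l s s', Aut.leafT l s → Aut.leafT l s' → s = s') ∧
  (∀ l s₀ s s', Aut.unaryT l s₀ s → Aut.unaryT l s₀ s' → s = s') ∧
  (∀ l s₁ s₂ s s', Aut.binaryT l s₁ s₂ s → Aut.binaryT l s₁ s₂ s' → s = s')

/-- The number of states. -/
noncomputable def card (Aut : BUTA Λ) : ℕ := @Fintype.card Aut.State Aut.stFintype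

end BUTA
/-! ### CBMs as labeled graphs -/

/-- A structure with domain `dom`, vertex labels in `Alph × Procs` (letter and
process) and edge relations labeled by `{→} ∪ DS` (`none` = process successor)
is a CBM over `(A, Alph)`. -/
def IsCBMGraph (A : Architecture) (Alph : Type) {V : Type}
    (dom : Set V) (lab : V → Option (Alph × A.Procs))
    (edge : Option A.DS → V → V → Prop) : Prop :=
  -- every vertex of the domain is labeled
  (∀ v ∈ dom, ∃ x, lab v = some x) ∧
  -- edges connect vertices of the domain
  (∀ γ u v, edge γ u v → u ∈ dom ∧ v ∈ dom) ∧
  -- on each process, the →-edges form the successor relation of a linear order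
  (∀ p : A.Procs, ∃ l : List V, l.Nodup ∧
    (∀ v, v ∈ l ↔ v ∈ dom ∧ ∃ a, lab v = some (a, p)) ∧
    (∀ u v, u ∈ l → v ∈ l →
      (edge none u v ↔ ∃ n, l[n]? = some u ∧ l[n + 1]? = some v))) ∧
  -- →-edges connect events of the same process
  (∀ u v, edge none u v → ∃ a b p, lab u = some (a, p) ∧ lab v = some (b, p)) ∧
  -- d-edges go from a Writer(d)-event to a Reader(d)-event
  (∀ d u v, edge (some d) u v →
    ∃ a b, lab u = some (a, A.Writer d) ∧ lab v = some (b, A.Reader d)) ∧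
  -- distinct matching edges are pairwise disjoint
  (∀ d₁ d₂ u₁ v₁ u₂ v₂, edge (some d₁) u₁ v₁ → edge (some d₂) u₂ v₂ →
    ¬ (d₁ = d₂ ∧ u₁ = u₂ ∧ v₁ = v₂) → u₁ ≠ u₂ ∧ u₁ ≠ v₂ ∧ v₁ ≠ u₂ ∧ v₁ ≠ v₂) ∧
  -- the transitive closure of the union of all edges is a strict partial order
  (∀ v, ¬ Relation.TransGen (fun u w => ∃ γ, edge γ u w) v v) ∧
  -- LIFO for stacks
  (∀ d, A.kind d = DSKind.stack → ∀ e₁ f₁ e₂ f₂,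
    edge (some d) e₁ f₁ → edge (some d) e₂ f₂ →
    Relation.TransGen (fun u w => ∃ γ, edge γ u w) e₁ e₂ →
    Relation.TransGen (fun u w => ∃ γ, edge γ u w) e₂ f₁ →
    Relation.TransGen (fun u w => ∃ γ, edge γ u w) f₂ f₁) ∧
  -- FIFO for queues
  (∀ d, A.kind d = DSKind.queue → ∀ e₁ f₁ e₂ f₂,
    edge (some d) e₁ f₁ → edge (some d) e₂ f₂ →
    Relation.TransGen (fun u w => ∃ γ, edge γ u w) e₁ e₂ →
    Relation.TransGen (fun u w => ∃ γ, edge γ u w) f₁ f₂)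

/-!
The automaton guesses, bottom-up, a linearization of `G_τ`. Every CBM condition compares events
on a common process only, so a graph is a CBM iff it has a linearization satisfying these
conditions on each process. An uncolored vertex never receives another edge, so its process
neighbours are final: two uncolored events adjacent on a process cannot be separated by a later
`⊕`, and the parts of a disjoint union interleave on each process only at colored vertices. Hence
the order of two events from different parts is determined by the order of the colors and the last
color at or before each event. It is therefore enough to remember, for each process, the order of
the colors, the shapes of the vertices, and the pairs of shapes joined by an edge, where the shape
of a vertex consists of its last color and three bits: `O(k² (|Procs| + |DS|))` bits in all. Graphs
with equal summaries are interchangeable under all operations, and a graph satisfying the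
conditions that has no colored vertex left is a CBM.
-/

/-! ### Linearized partial CBMs and similarity -/

theorem cmp_eq_cmp_of_lt_iff_lt {α β : Type*} [LinearOrder α] [LinearOrder β] {a b : α} {c d : β}
    (hlt : a < b ↔ c < d) (hgt : b < a ↔ d < c) : cmp a b = cmp c d := by
  rcases lt_trichotomy a b with h | rfl | h
  · rw [h.cmp_eq_lt, (hlt.1 h).cmp_eq_lt]
  · have hcd : c = d := le_antisymm (not_lt.1 (hgt.not.1 (lt_irrefl a)))
      (not_lt.1 (hlt.not.1 (lt_irrefl a)))
    rw [hcd, cmp_self_eq_eq, cmp_self_eq_eq]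
  · rw [h.cmp_eq_gt, (hgt.1 h).cmp_eq_gt]

theorem exists_injective_nat_of_isStrictOrder {V : Type*} [Finite V] (r : V → V → Prop)
    [IsStrictOrder V r] :
    ∃ pos : V → ℕ, Function.Injective pos ∧ ∀ u v, r u v → pos u < pos v := by
  let _ := partialOrderOfSO r
  let _ : Fintype (LinearExtension V) := Fintype.ofFinite V
  let e := (Fintype.orderIsoFinOfCardEq (LinearExtension V) rfl).symm
  refine ⟨fun v => e (toLinearExtension v), Fin.val_injective.comp e.injective, fun u v huv => ?_⟩
  have hlt : (toLinearExtension u : LinearExtension V) < toLinearExtension v :=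
    lt_of_le_of_ne (toLinearExtension.monotone (le_of_lt (show u < v from huv)))
      (show u < v from huv).ne
  exact Fin.lt_def.1 (e.strictMono hlt)

/-- A graph over the architecture `A` whose vertices lie on processes and whose edges are labeled
by `none` (process successor) or by a data structure, together with a relation assigning colors in
`K` to vertices. Letters are left out, since the axioms of a CBM do not mention them. -/
structure ColoredGraph (A : Architecture) (K V : Type*) where
  proc : V → A.Procs
  edge : Option A.DS → V → V → Prop
  color : K → V → Prop

namespace ColoredGraph

variable {A : Architecture} {K V V' : Type*}

/-- The colored vertices are those which later operations can still connect. -/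
def Colored (G : ColoredGraph A K V) (v : V) : Prop := ∃ c, G.color c v

/-- `v` is the target of a process-successor edge. -/
def HasPred (G : ColoredGraph A K V) (v : V) : Prop := ∃ u, G.edge none u v

/-- `u` is the source of a process-successor edge. -/
def HasSucc (G : ColoredGraph A K V) (u : V) : Prop := ∃ v, G.edge none u v

end ColoredGraph

/-- The conditions relating two matching edges of a CBM whose events are enumerated by `pos`:
disjointness, LIFO and FIFO. -/
structure Architecture.Compatible (A : Architecture) {V : Type*} (pos : V → ℕ) (d₁ : A.DS)
    (e₁ f₁ : V) (d₂ : A.DS) (e₂ f₂ : V) : Prop where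
  eq_of_meet : e₁ = e₂ ∨ e₁ = f₂ ∨ f₁ = e₂ ∨ f₁ = f₂ → d₁ = d₂ ∧ e₁ = e₂ ∧ f₁ = f₂
  lifo : d₁ = d₂ → A.kind d₁ = DSKind.stack → pos e₁ < pos e₂ → pos e₂ < pos f₁ → pos f₂ < pos f₁
  fifo : d₁ = d₂ → A.kind d₁ = DSKind.queue → pos e₁ < pos e₂ → pos f₁ < pos f₂

theorem Architecture.compatible_comp_iff {A : Architecture} {V W : Type*} {f : V → W}
    (hf : Function.Injective f) {pos : W → ℕ} {d₁ d₂ : A.DS} {e₁ f₁ e₂ f₂ : V} :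
    A.Compatible (pos ∘ f) d₁ e₁ f₁ d₂ e₂ f₂ ↔
      A.Compatible pos d₁ (f e₁) (f f₁) d₂ (f e₂) (f f₂) := by
  constructor <;> rintro ⟨hmeet, hlifo, hfifo⟩ <;> refine ⟨?_, hlifo, hfifo⟩ <;>
    simpa only [hf.eq_iff] using hmeet

namespace ColoredGraph

variable {A : Architecture} {K V V' : Type*}

/-- `G` is a fragment of a CBM linearized by `pos`: uncolored vertices already have their final
neighbours on their process, while colored ones may still lack a predecessor or a successor. -/
structure IsPartialCBM (G : ColoredGraph A K V) (pos : V → ℕ) : Prop where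
  pos_injective : Function.Injective pos
  color_unique : ∀ {c u v}, G.color c u → G.color c v → u = v
  color_injective : ∀ {c c' v}, G.color c v → G.color c' v → c = c'
  pos_lt : ∀ {γ u v}, G.edge γ u v → pos u < pos v
  proc_eq : ∀ {u v}, G.edge none u v → G.proc u = G.proc v
  adjacent : ∀ {u v w}, G.edge none u v → G.proc u = G.proc w → pos u < pos w → ¬pos w < pos v
  hasPred : ∀ {u v}, G.proc u = G.proc v → pos u < pos v → ¬G.Colored v → G.HasPred v
  hasSucc : ∀ {u v}, G.proc u = G.proc v → pos u < pos v → ¬G.Colored u → G.HasSucc u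
  writer : ∀ {d e f}, G.edge (some d) e f → G.proc e = A.Writer d
  reader : ∀ {d e f}, G.edge (some d) e f → G.proc f = A.Reader d
  compatible : ∀ {d₁ e₁ f₁ d₂ e₂ f₂}, G.edge (some d₁) e₁ f₁ → G.edge (some d₂) e₂ f₂ →
    A.Compatible pos d₁ e₁ f₁ d₂ e₂ f₂

/-- The colors found on the process of `v` at or before `v`. -/
def lower (G : ColoredGraph A K V) (pos : V → ℕ) (v : V) : Set K :=
  {c | ∃ x, G.color c x ∧ G.proc x = G.proc v ∧ pos x ≤ pos v}

/-- The order which `pos` induces on colors; the index `p` records the process of the vertex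
colored `c`. -/
def colorLT (G : ColoredGraph A K V) (pos : V → ℕ) (p : A.Procs) (c c' : K) : Prop :=
  ∃ u v, G.color c u ∧ G.color c' v ∧ G.proc u = p ∧ pos u < pos v

/-- `v` and `v'` cannot be told apart by the operations on colored graphs. -/
structure Twin (G : ColoredGraph A K V) (pos : V → ℕ) (G' : ColoredGraph A K V') (pos' : V' → ℕ)
    (v : V) (v' : V') : Prop where
  proc_eq : G.proc v = G'.proc v'
  color_iff : ∀ c, G.color c v ↔ G'.color c v'
  mem_lower_iff : ∀ c, c ∈ G.lower pos v ↔ c ∈ G'.lower pos' v'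
  hasPred_iff : G.HasPred v ↔ G'.HasPred v'
  hasSucc_iff : G.HasSucc v ↔ G'.HasSucc v'

/-- Every vertex and every edge of `G'` has a twin in `G`, and the orders on colors coincide. -/
structure Covers (G : ColoredGraph A K V) (pos : V → ℕ) (G' : ColoredGraph A K V')
    (pos' : V' → ℕ) : Prop where
  colorLT_iff : ∀ p c c', G.colorLT pos p c c' ↔ G'.colorLT pos' p c c'
  exists_twin : ∀ v', ∃ v, Twin G pos G' pos' v v'
  exists_twin_edge : ∀ {γ u' v'}, G'.edge γ u' v' →
    ∃ u v, G.edge γ u v ∧ Twin G pos G' pos' u u' ∧ Twin G pos G' pos' v v'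

/-- Mutual covering, the equivalence of linearized graphs that the operations respect. -/
def Similar (G : ColoredGraph A K V) (pos : V → ℕ) (G' : ColoredGraph A K V') (pos' : V' → ℕ) :
    Prop :=
  Covers G pos G' pos' ∧ Covers G' pos' G pos

/-- The vertices `u`, `v` relate to each other as `u'`, `v'` do: the first two share a process iff
the last two do, and in that case they come in the same order. -/
structure Aligned (G : ColoredGraph A K V) (pos : V → ℕ) (G' : ColoredGraph A K V')
    (pos' : V' → ℕ) (u v : V) (u' v' : V') : Prop where
  proc_eq_iff : G.proc u = G.proc v ↔ G'.proc u' = G'.proc v'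
  cmp_eq : G.proc u = G.proc v → cmp (pos u) (pos v) = cmp (pos' u') (pos' v')

section Transfer

variable {G : ColoredGraph A K V} {G' : ColoredGraph A K V'} {pos : V → ℕ} {pos' : V' → ℕ}

theorem Similar.symm (h : Similar G pos G' pos') : Similar G' pos' G pos := ⟨h.2, h.1⟩

theorem Twin.symm {v : V} {v' : V'} (h : Twin G pos G' pos' v v') : Twin G' pos' G pos v' v :=
  ⟨h.proc_eq.symm, fun c => (h.color_iff c).symm, fun c => (h.mem_lower_iff c).symm,
    h.hasPred_iff.symm, h.hasSucc_iff.symm⟩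

theorem Twin.colored_iff {v : V} {v' : V'} (h : Twin G pos G' pos' v v') :
    G.Colored v ↔ G'.Colored v' :=
  exists_congr h.color_iff

theorem Similar.exists_color_iff (h : Similar G pos G' pos') (c : K) :
    (∃ x, G.color c x) ↔ ∃ x', G'.color c x' := by
  constructor
  · rintro ⟨x, hx⟩
    obtain ⟨x', hxx'⟩ := h.2.exists_twin x
    exact ⟨x', (hxx'.color_iff c).2 hx⟩
  · rintro ⟨x', hx'⟩
    obtain ⟨x, hxx'⟩ := h.1.exists_twin x'
    exact ⟨x, (hxx'.color_iff c).2 hx'⟩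

theorem IsPartialCBM.mem_lower_iff (hG : G.IsPartialCBM pos) {c : K} {x v : V}
    (hx : G.color c x) : c ∈ G.lower pos v ↔ G.proc x = G.proc v ∧ pos x ≤ pos v := by
  refine ⟨fun ⟨y, hy, hyv⟩ => ?_, fun h => ⟨x, hx, h⟩⟩
  rwa [hG.color_unique hx hy]

theorem IsPartialCBM.colorLT_iff (hG : G.IsPartialCBM pos) {c c' : K} {u v : V}
    (hu : G.color c u) (hv : G.color c' v) {p : A.Procs} :
    G.colorLT pos p c c' ↔ G.proc u = p ∧ pos u < pos v := by
  refine ⟨fun ⟨x, y, hx, hy, hxy⟩ => ?_, fun h => ⟨u, v, hu, hv, h⟩⟩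
  rwa [hG.color_unique hu hx, hG.color_unique hv hy]

theorem Covers.lt_iff_lt_of_color (h : Covers G pos G' pos') (hG : G.IsPartialCBM pos)
    (hG' : G'.IsPartialCBM pos') {c c' : K} {u v : V} {u' v' : V'} (hu : G.color c u)
    (hv : G.color c' v) (hu' : G'.color c u') (hv' : G'.color c' v') :
    pos u < pos v ↔ pos' u' < pos' v' := by
  have hp : G.proc u = G'.proc u' := by
    obtain ⟨x, hx⟩ := h.exists_twin u'
    rw [hG.color_unique hu ((hx.color_iff c).2 hu'), hx.proc_eq]
  simpa [hG.colorLT_iff hu hv, hG'.colorLT_iff hu' hv', hp] using h.colorLT_iff (G.proc u) c c'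

theorem Aligned.swap {u v : V} {u' v' : V'} (h : Aligned G pos G' pos' u v u' v') :
    Aligned G pos G' pos' v u v' u' :=
  ⟨by rw [eq_comm, h.proc_eq_iff, eq_comm], fun hp => cmp_eq_cmp_symm.1 (h.cmp_eq hp.symm)⟩

theorem Aligned.lt_iff {u v : V} {u' v' : V'} (h : Aligned G pos G' pos' u v u' v')
    (hp : G.proc u = G.proc v) : pos u < pos v ↔ pos' u' < pos' v' :=
  lt_iff_lt_of_cmp_eq_cmp (h.cmp_eq hp)

theorem Aligned.le_iff {u v : V} {u' v' : V'} (h : Aligned G pos G' pos' u v u' v')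
    (hp : G.proc u = G.proc v) : pos u ≤ pos v ↔ pos' u' ≤ pos' v' :=
  le_iff_le_of_cmp_eq_cmp (h.cmp_eq hp)

theorem Aligned.eq_iff {u v : V} {u' v' : V'} (h : Aligned G pos G' pos' u v u' v')
    (hpos : Function.Injective pos) (hpos' : Function.Injective pos') : u = v ↔ u' = v' := by
  rw [← hpos.eq_iff, ← hpos'.eq_iff]
  by_cases hp : G.proc u = G.proc v
  · exact eq_iff_eq_of_cmp_eq_cmp (h.cmp_eq hp)
  · have hp' := h.proc_eq_iff.not.1 hp
    exact iff_of_false (fun he => hp (congrArg G.proc (hpos he)))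
      fun he => hp' (congrArg G'.proc (hpos' he))

theorem Twin.aligned_of_color {u v : V} {u' v' : V'} {c : K} (hG : G.IsPartialCBM pos)
    (hG' : G'.IsPartialCBM pos') (hu : Twin G pos G' pos' u u') (hv : Twin G pos G' pos' v v')
    (hc : G.color c u) : Aligned G pos G' pos' u v u' v' := by
  have hc' : G'.color c u' := (hu.color_iff c).1 hc
  refine ⟨by rw [hu.proc_eq, hv.proc_eq], fun hp => ?_⟩
  have hp' : G'.proc u' = G'.proc v' := by rw [← hu.proc_eq, hp, hv.proc_eq]
  have hle : pos u ≤ pos v ↔ pos' u' ≤ pos' v' := by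
    simpa [hG.mem_lower_iff hc, hG'.mem_lower_iff hc', hp, hp'] using hv.mem_lower_iff c
  have heq : pos u = pos v ↔ pos' u' = pos' v' := by
    have heq_iff : u = v ↔ G.color c v := ⟨(· ▸ hc), hG.color_unique hc⟩
    have heq_iff' : u' = v' ↔ G'.color c v' := ⟨(· ▸ hc'), hG'.color_unique hc'⟩
    rw [hG.pos_injective.eq_iff, hG'.pos_injective.eq_iff, heq_iff, heq_iff', hv.color_iff]
  exact cmp_eq_cmp_of_lt_iff_lt (by omega) (by omega)

theorem _root_.Architecture.Compatible.transfer {d₁ d₂ : A.DS} {e₁ f₁ e₂ f₂ : V}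
    {e₁' f₁' e₂' f₂' : V'} (h : A.Compatible pos d₁ e₁ f₁ d₂ e₂ f₂)
    (hpos : Function.Injective pos) (hpos' : Function.Injective pos')
    (he₁ : G.proc e₁ = A.Writer d₁) (hf₁ : G.proc f₁ = A.Reader d₁)
    (he₂ : G.proc e₂ = A.Writer d₂) (hf₂ : G.proc f₂ = A.Reader d₂)
    (hee : Aligned G pos G' pos' e₁ e₂ e₁' e₂') (hef : Aligned G pos G' pos' e₁ f₂ e₁' f₂')
    (hfe : Aligned G pos G' pos' f₁ e₂ f₁' e₂') (hff : Aligned G pos G' pos' f₁ f₂ f₁' f₂') :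
    A.Compatible pos' d₁ e₁' f₁' d₂ e₂' f₂' where
  eq_of_meet := by
    rw [← hee.eq_iff hpos hpos', ← hef.eq_iff hpos hpos', ← hfe.eq_iff hpos hpos',
      ← hff.eq_iff hpos hpos']
    exact h.eq_of_meet
  lifo hd hk := by
    subst hd
    have hWR := A.stack_wr d₁ hk
    rw [← hee.lt_iff (by rw [he₁, he₂]), ← hfe.swap.lt_iff (by rw [he₂, hf₁, hWR]),
      ← hff.swap.lt_iff (by rw [hf₁, hf₂])]
    exact h.lifo rfl hk
  fifo hd hk := by
    subst hd
    rw [← hee.lt_iff (by rw [he₁, he₂]), ← hff.lt_iff (by rw [hf₁, hf₂])]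
    exact h.fifo rfl hk

end Transfer

end ColoredGraph

/-! ### Adding edges and forgetting colors -/

namespace ColoredGraph

variable {A : Architecture} {K V V' : Type*}

/-- The operation `Add^γ_{i,j}`. -/
def add (γ : Option A.DS) (i j : K) (G : ColoredGraph A K V) : ColoredGraph A K V where
  proc := G.proc
  edge γ' u v := G.edge γ' u v ∨ γ' = γ ∧ G.color i u ∧ G.color j v
  color := G.color

/-- The operation `Forget_i`. -/
def forget (i : K) (G : ColoredGraph A K V) : ColoredGraph A K V where
  proc := G.proc
  edge := G.edge
  color c v := c ≠ i ∧ G.color c v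

variable {G : ColoredGraph A K V} {G' : ColoredGraph A K V'} {pos : V → ℕ} {pos' : V' → ℕ}
  {γ : Option A.DS} {i j : K}

theorem hasPred_add {v : V} :
    (G.add γ i j).HasPred v ↔ G.HasPred v ∨ γ = none ∧ (∃ u, G.color i u) ∧ G.color j v := by
  simp only [HasPred, add, exists_or, exists_and_left, exists_and_right, eq_comm (a := γ)]

theorem hasSucc_add {u : V} :
    (G.add γ i j).HasSucc u ↔ G.HasSucc u ∨ γ = none ∧ G.color i u ∧ ∃ v, G.color j v := by
  simp only [HasSucc, add, exists_or, exists_and_left, eq_comm (a := γ)]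

theorem IsPartialCBM.of_add (hG : (G.add γ i j).IsPartialCBM pos) : G.IsPartialCBM pos where
  pos_injective := hG.pos_injective
  color_unique := hG.color_unique
  color_injective := hG.color_injective
  pos_lt h := hG.pos_lt (.inl h)
  proc_eq h := hG.proc_eq (.inl h)
  adjacent h := hG.adjacent (.inl h)
  hasPred hp hlt hv := (hasPred_add.1 (hG.hasPred hp hlt hv)).resolve_right
    fun h => hv ⟨j, h.2.2⟩
  hasSucc hp hlt hu := (hasSucc_add.1 (hG.hasSucc hp hlt hu)).resolve_right
    fun h => hu ⟨i, h.2.1⟩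
  writer h := hG.writer (.inl h)
  reader h := hG.reader (.inl h)
  compatible h₁ h₂ := hG.compatible (.inl h₁) (.inl h₂)

theorem Twin.add (h : Similar G pos G' pos') {v : V} {v' : V'} (hv : Twin G pos G' pos' v v') :
    Twin (G.add γ i j) pos (G'.add γ i j) pos' v v' where
  proc_eq := hv.proc_eq
  color_iff := hv.color_iff
  mem_lower_iff := hv.mem_lower_iff
  hasPred_iff := by
    rw [hasPred_add, hasPred_add, hv.hasPred_iff, h.exists_color_iff, hv.color_iff]
  hasSucc_iff := by
    rw [hasSucc_add, hasSucc_add, hv.hasSucc_iff, h.exists_color_iff, hv.color_iff]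

theorem Covers.exists_twin_edge_add (h : Covers G pos G' pos') {γ' : Option A.DS} {u' v' : V'}
    (he : (G'.add γ i j).edge γ' u' v') :
    ∃ u v, (G.add γ i j).edge γ' u v ∧ Twin G pos G' pos' u u' ∧ Twin G pos G' pos' v v' := by
  rcases he with he | ⟨hγ, hu', hv'⟩
  · obtain ⟨u, v, huv, hu, hv⟩ := h.exists_twin_edge he
    exact ⟨u, v, .inl huv, hu, hv⟩
  · obtain ⟨u, hu⟩ := h.exists_twin u'
    obtain ⟨v, hv⟩ := h.exists_twin v'
    exact ⟨u, v, .inr ⟨hγ, (hu.color_iff i).2 hu', (hv.color_iff j).2 hv'⟩, hu, hv⟩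

theorem Similar.covers_add (h : Similar G pos G' pos') :
    Covers (G.add γ i j) pos (G'.add γ i j) pos' where
  colorLT_iff := h.1.colorLT_iff
  exists_twin v' := (h.1.exists_twin v').imp fun _ hv => hv.add h
  exists_twin_edge he := by
    obtain ⟨u, v, huv, hu, hv⟩ := h.1.exists_twin_edge_add he
    exact ⟨u, v, huv, hu.add h, hv.add h⟩

theorem Similar.add (h : Similar G pos G' pos') :
    Similar (G.add γ i j) pos (G'.add γ i j) pos' :=
  ⟨h.covers_add, h.symm.covers_add⟩

theorem IsPartialCBM.compatible_add (hG : (G.add γ i j).IsPartialCBM pos)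
    (hG' : G'.IsPartialCBM pos') (h : Covers G pos G' pos') {d₁ d₂ : A.DS} {e₁ f₁ e₂ f₂ : V'}
    (h₁ : (G'.add γ i j).edge (some d₁) e₁ f₁) (h₂ : (G'.add γ i j).edge (some d₂) e₂ f₂) :
    A.Compatible pos' d₁ e₁ f₁ d₂ e₂ f₂ := by
  by_cases hold : G'.edge (some d₁) e₁ f₁ ∧ G'.edge (some d₂) e₂ f₂
  · exact hG'.compatible hold.1 hold.2
  obtain ⟨u₁, v₁, huv₁, hu₁, hv₁⟩ := h.exists_twin_edge_add h₁
  obtain ⟨u₂, v₂, huv₂, hu₂, hv₂⟩ := h.exists_twin_edge_add h₂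
  have aligned {x y x' y'} (hx : Twin G pos G' pos' x x') (hy : Twin G pos G' pos' y y')
      (hc : G'.Colored x' ∨ G'.Colored y') : Aligned G pos G' pos' x y x' y' := by
    rcases hc with ⟨c, hc⟩ | ⟨c, hc⟩
    · exact hx.aligned_of_color hG.of_add hG' hy ((hx.color_iff c).2 hc)
    · exact (hy.aligned_of_color hG.of_add hG' hx ((hy.color_iff c).2 hc)).swap
  have hcolored : G'.Colored e₁ ∧ G'.Colored f₁ ∨ G'.Colored e₂ ∧ G'.Colored f₂ := by
    rcases h₁ with h₁ | ⟨-, hi, hj⟩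
    · rcases h₂ with h₂ | ⟨-, hi, hj⟩
      · exact absurd ⟨h₁, h₂⟩ hold
      · exact .inr ⟨⟨i, hi⟩, j, hj⟩
    · exact .inl ⟨⟨i, hi⟩, j, hj⟩
  exact (hG.compatible huv₁ huv₂).transfer (G := G) hG.pos_injective hG'.pos_injective
    (hG.writer huv₁) (hG.reader huv₁) (hG.writer huv₂) (hG.reader huv₂)
    (aligned hu₁ hu₂ (by tauto)) (aligned hu₁ hv₂ (by tauto))
    (aligned hv₁ hu₂ (by tauto)) (aligned hv₁ hv₂ (by tauto))

theorem IsPartialCBM.add_of_covers (hG : (G.add γ i j).IsPartialCBM pos)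
    (hG' : G'.IsPartialCBM pos') (h : Covers G pos G' pos') :
    (G'.add γ i j).IsPartialCBM pos' where
  pos_injective := hG'.pos_injective
  color_unique := hG'.color_unique
  color_injective := hG'.color_injective
  pos_lt {γ' u' v'} he := by
    rcases he with he | ⟨rfl, hi, hj⟩
    · exact hG'.pos_lt he
    obtain ⟨u, hu⟩ := h.exists_twin u'
    obtain ⟨v, hv⟩ := h.exists_twin v'
    have hi₀ := (hu.color_iff i).2 hi
    have hj₀ := (hv.color_iff j).2 hj
    exact (h.lt_iff_lt_of_color hG.of_add hG' hi₀ hj₀ hi hj).1 (hG.pos_lt (.inr ⟨rfl, hi₀, hj₀⟩))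
  proc_eq he := by
    obtain ⟨u, v, huv, hu, hv⟩ := h.exists_twin_edge_add he
    exact hu.proc_eq.symm.trans ((hG.proc_eq huv).trans hv.proc_eq)
  adjacent {u' v' w'} he hp := by
    rcases he with he | ⟨hγ, hi, hj⟩
    · exact hG'.adjacent he hp
    obtain ⟨u, v, huv, hu, hv⟩ := h.exists_twin_edge_add (.inr ⟨hγ, hi, hj⟩)
    obtain ⟨w, hw⟩ := h.exists_twin w'
    have hpu : G.proc u = G.proc w := by rw [hu.proc_eq, hw.proc_eq]; exact hp
    have hpv : G.proc u = G.proc v := hG.proc_eq huv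
    have hc := (hu.color_iff i).2 hi
    have hc' := (hv.color_iff j).2 hj
    rw [← (hu.aligned_of_color hG.of_add hG' hw hc).lt_iff hpu,
      ← (hv.aligned_of_color hG.of_add hG' hw hc').swap.lt_iff (hpu.symm.trans hpv)]
    exact hG.adjacent huv hpu
  hasPred hp hlt hv := hasPred_add.2 (.inl (hG'.hasPred hp hlt hv))
  hasSucc hp hlt hu := hasSucc_add.2 (.inl (hG'.hasSucc hp hlt hu))
  writer he := by
    obtain ⟨u, v, huv, hu, -⟩ := h.exists_twin_edge_add he
    exact hu.proc_eq.symm.trans (hG.writer huv)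
  reader he := by
    obtain ⟨u, v, huv, -, hv⟩ := h.exists_twin_edge_add he
    exact hv.proc_eq.symm.trans (hG.reader huv)
  compatible := hG.compatible_add hG' h

theorem lower_forget {v : V} : (G.forget i).lower pos v = G.lower pos v \ {i} := by
  ext c
  simp only [lower, forget, Set.mem_sdiff, Set.mem_ofPred_eq, Set.mem_singleton_iff]
  tauto

theorem colorLT_forget {p : A.Procs} {c c' : K} :
    (G.forget i).colorLT pos p c c' ↔ c ≠ i ∧ c' ≠ i ∧ G.colorLT pos p c c' := by
  simp only [colorLT, forget]
  tauto

theorem IsPartialCBM.of_forget (hG : (G.forget i).IsPartialCBM pos)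
    (hunique : ∀ {c u v}, G.color c u → G.color c v → u = v)
    (hinj : ∀ {c c' v}, G.color c v → G.color c' v → c = c') : G.IsPartialCBM pos :=
  { hG with
    color_unique := hunique
    color_injective := hinj
    hasPred := fun hp hlt hv => hG.hasPred hp hlt fun ⟨c, hc⟩ => hv ⟨c, hc.2⟩
    hasSucc := fun hp hlt hu => hG.hasSucc hp hlt fun ⟨c, hc⟩ => hu ⟨c, hc.2⟩ }

theorem Twin.forget {v : V} {v' : V'} (hv : Twin G pos G' pos' v v') :
    Twin (G.forget i) pos (G'.forget i) pos' v v' :=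
  { hv with
    color_iff := fun c => and_congr_right fun _ => hv.color_iff c
    mem_lower_iff := fun c => by
      rw [lower_forget, lower_forget, Set.mem_sdiff, Set.mem_sdiff, hv.mem_lower_iff] }

theorem Covers.forget (h : Covers G pos G' pos') :
    Covers (G.forget i) pos (G'.forget i) pos' where
  colorLT_iff p c c' := by rw [colorLT_forget, colorLT_forget, h.colorLT_iff]
  exists_twin v' := (h.exists_twin v').imp fun _ hv => hv.forget
  exists_twin_edge he := by
    obtain ⟨u, v, huv, hu, hv⟩ := h.exists_twin_edge he
    exact ⟨u, v, huv, hu.forget, hv.forget⟩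

theorem Similar.forget (h : Similar G pos G' pos') :
    Similar (G.forget i) pos (G'.forget i) pos' :=
  ⟨h.1.forget, h.2.forget⟩

theorem colored_iff_colored_forget_or {v : V} :
    G.Colored v ↔ (G.forget i).Colored v ∨ G.color i v := by
  refine ⟨fun ⟨c, hc⟩ => ?_, fun h => h.elim (fun ⟨c, hc⟩ => ⟨c, hc.2⟩) fun hc => ⟨i, hc⟩⟩
  by_cases hci : c = i
  · exact .inr (hci ▸ hc)
  · exact .inl ⟨c, hci, hc⟩

theorem IsPartialCBM.forget_of_covers (hG : G.IsPartialCBM pos)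
    (hGi : (G.forget i).IsPartialCBM pos) (hG' : G'.IsPartialCBM pos')
    (h : Covers G pos G' pos') : (G'.forget i).IsPartialCBM pos' :=
  { hG' with
    color_unique := fun hu hv => hG'.color_unique hu.2 hv.2
    color_injective := fun hc hc' => hG'.color_injective hc.2 hc'.2
    hasPred := fun {u' v'} hp hlt hv' => by
      by_cases hc : G'.color i v'
      · obtain ⟨u, hu⟩ := h.exists_twin u'
        obtain ⟨v, hv⟩ := h.exists_twin v'
        have halign := (hv.aligned_of_color hG hG' hu ((hv.color_iff i).2 hc)).swap
        have hpuv := halign.proc_eq_iff.2 hp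
        exact hv.hasPred_iff.1 (hGi.hasPred hpuv ((halign.lt_iff hpuv).2 hlt)
          (hv.forget.colored_iff.not.2 hv'))
      · exact hG'.hasPred hp hlt fun h => (colored_iff_colored_forget_or.1 h).elim hv' hc
    hasSucc := fun {u' v'} hp hlt hu' => by
      by_cases hc : G'.color i u'
      · obtain ⟨u, hu⟩ := h.exists_twin u'
        obtain ⟨v, hv⟩ := h.exists_twin v'
        have halign := hu.aligned_of_color hG hG' hv ((hu.color_iff i).2 hc)
        have hpuv := halign.proc_eq_iff.2 hp
        exact hu.hasSucc_iff.1 (hGi.hasSucc hpuv ((halign.lt_iff hpuv).2 hlt)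
          (hu.forget.colored_iff.not.2 hu'))
      · exact hG'.hasSucc hp hlt fun h => (colored_iff_colored_forget_or.1 h).elim hu' hc }

end ColoredGraph

/-! ### Disjoint unions -/

namespace ColoredGraph

section Reparametrize

variable {A : Architecture} {K V V' : Type*} {G : ColoredGraph A K V} {G' : ColoredGraph A K V'}
  {pos : V → ℕ} {pos' q : V' → ℕ}

theorem IsPartialCBM.congr_pos (hG' : G'.IsPartialCBM pos')
    (hq : ∀ u v, q u < q v ↔ pos' u < pos' v) : G'.IsPartialCBM q where
  pos_injective u v huv := by
    have huv' := hq u v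
    have hvu' := hq v u
    exact hG'.pos_injective (by omega)
  color_unique := hG'.color_unique
  color_injective := hG'.color_injective
  pos_lt he := (hq _ _).2 (hG'.pos_lt he)
  proc_eq := hG'.proc_eq
  adjacent := by
    simp only [hq]
    exact hG'.adjacent
  hasPred := by
    simp only [hq]
    exact hG'.hasPred
  hasSucc := by
    simp only [hq]
    exact hG'.hasSucc
  writer := hG'.writer
  reader := hG'.reader
  compatible h₁ h₂ := by
    obtain ⟨hmeet, hlifo, hfifo⟩ := hG'.compatible h₁ h₂
    exact ⟨hmeet, by simpa only [hq] using hlifo, by simpa only [hq] using hfifo⟩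

theorem lower_congr_pos (hq : ∀ u v, q u < q v ↔ pos' u < pos' v) (v : V') :
    G'.lower q v = G'.lower pos' v := by
  simp only [lower, ← not_lt, hq]

theorem colorLT_congr_pos (hq : ∀ u v, q u < q v ↔ pos' u < pos' v) :
    G'.colorLT q = G'.colorLT pos' := by
  ext
  simp only [colorLT, hq]

theorem Twin.congr_pos (hq : ∀ u v, q u < q v ↔ pos' u < pos' v) {v : V} {v' : V'}
    (h : Twin G pos G' pos' v v') : Twin G pos G' q v v' :=
  { h with mem_lower_iff := by rw [lower_congr_pos hq]; exact h.mem_lower_iff }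

theorem Similar.congr_pos (hq : ∀ u v, q u < q v ↔ pos' u < pos' v)
    (h : Similar G pos G' pos') : Similar G pos G' q := by
  refine ⟨⟨?_, fun v' => (h.1.exists_twin v').imp fun _ hv => hv.congr_pos hq, fun he => ?_⟩,
    ⟨?_, fun v => (h.2.exists_twin v).imp fun _ hv => (hv.symm.congr_pos hq).symm, fun he => ?_⟩⟩
  · rw [colorLT_congr_pos hq]
    exact h.1.colorLT_iff
  · obtain ⟨u, v, huv, hu, hv⟩ := h.1.exists_twin_edge he
    exact ⟨u, v, huv, hu.congr_pos hq, hv.congr_pos hq⟩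
  · rw [colorLT_congr_pos hq]
    exact h.2.colorLT_iff
  · obtain ⟨u, v, huv, hu, hv⟩ := h.2.exists_twin_edge he
    exact ⟨u, v, huv, (hu.symm.congr_pos hq).symm, (hv.symm.congr_pos hq).symm⟩

end Reparametrize

variable {A : Architecture} {K ι : Type*} {V V' : ι → Type*}

/-- The operation `⊕`, for an arbitrary family of graphs. -/
def disjointUnion (G : ∀ b, ColoredGraph A K (V b)) : ColoredGraph A K (Σ b, V b) where
  proc x := (G x.1).proc x.2
  edge γ x y := ∃ b u v, x = ⟨b, u⟩ ∧ y = ⟨b, v⟩ ∧ (G b).edge γ u v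
  color c x := (G x.1).color c x.2

variable {G : ∀ b, ColoredGraph A K (V b)} {G' : ∀ b, ColoredGraph A K (V' b)}
  {pos : (Σ b, V b) → ℕ} {q : (Σ b, V' b) → ℕ}

theorem hasPred_disjointUnion {b : ι} {v : V b} :
    (disjointUnion G).HasPred ⟨b, v⟩ ↔ (G b).HasPred v := by
  refine ⟨?_, fun ⟨u, hu⟩ => ⟨⟨b, u⟩, b, u, v, rfl, rfl, hu⟩⟩
  rintro ⟨x, b, u, v, rfl, hv, hu⟩
  cases hv
  exact ⟨u, hu⟩

theorem hasSucc_disjointUnion {b : ι} {u : V b} :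
    (disjointUnion G).HasSucc ⟨b, u⟩ ↔ (G b).HasSucc u := by
  refine ⟨?_, fun ⟨v, hv⟩ => ⟨⟨b, v⟩, b, u, v, rfl, rfl, hv⟩⟩
  rintro ⟨y, b, u, v, hu, rfl, hv⟩
  cases hu
  exact ⟨v, hv⟩

theorem IsPartialCBM.of_disjointUnion (hG : (disjointUnion G).IsPartialCBM pos) (b : ι) :
    (G b).IsPartialCBM (pos ∘ Sigma.mk b) where
  pos_injective := hG.pos_injective.comp sigma_mk_injective
  color_unique {_ u v} hu hv :=
    sigma_mk_injective (hG.color_unique (u := ⟨b, u⟩) (v := ⟨b, v⟩) hu hv)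
  color_injective {_ _ v} := hG.color_injective (v := ⟨b, v⟩)
  pos_lt he := hG.pos_lt ⟨b, _, _, rfl, rfl, he⟩
  proc_eq he := hG.proc_eq ⟨b, _, _, rfl, rfl, he⟩
  adjacent {_ _ w} he := hG.adjacent (w := ⟨b, w⟩) ⟨b, _, _, rfl, rfl, he⟩
  hasPred {u v} hp hlt hv :=
    hasPred_disjointUnion.1 (hG.hasPred (u := ⟨b, u⟩) (v := ⟨b, v⟩) hp hlt hv)
  hasSucc {u v} hp hlt hu :=
    hasSucc_disjointUnion.1 (hG.hasSucc (u := ⟨b, u⟩) (v := ⟨b, v⟩) hp hlt hu)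
  writer he := hG.writer ⟨b, _, _, rfl, rfl, he⟩
  reader he := hG.reader ⟨b, _, _, rfl, rfl, he⟩
  compatible h₁ h₂ := (Architecture.compatible_comp_iff sigma_mk_injective).2
    (hG.compatible ⟨b, _, _, rfl, rfl, h₁⟩ ⟨b, _, _, rfl, rfl, h₂⟩)

/-- Where a process leaves the component `a` it does so from a colored vertex: an uncolored one
already has its successor, which lies in the same component. -/
theorem IsPartialCBM.exists_color_ge [∀ b, Finite (V b)] (hG : (disjointUnion G).IsPartialCBM pos)
    {a b : ι} (hab : a ≠ b) {v : V a} {w : V b} (hp : (G a).proc v = (G b).proc w)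
    (hlt : pos ⟨a, v⟩ < pos ⟨b, w⟩) :
    ∃ x i, (G a).color i x ∧ (G a).proc x = (G a).proc v ∧ pos ⟨a, v⟩ ≤ pos ⟨a, x⟩ ∧
      pos ⟨a, x⟩ < pos ⟨b, w⟩ := by
  obtain ⟨x, ⟨hxp, hvx, hxw⟩, hmax⟩ := Set.exists_max_image
    {x : V a | (G a).proc x = (G a).proc v ∧ pos ⟨a, v⟩ ≤ pos ⟨a, x⟩ ∧ pos ⟨a, x⟩ < pos ⟨b, w⟩}
    (pos ⟨a, ·⟩) (Set.toFinite _) ⟨v, rfl, le_rfl, hlt⟩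
  by_cases hx : (G a).Colored x
  · obtain ⟨i, hi⟩ := hx
    exact ⟨x, i, hi, hxp, hvx, hxw⟩
  exfalso
  have hpxw : (disjointUnion G).proc ⟨a, x⟩ = (disjointUnion G).proc ⟨b, w⟩ := hxp.trans hp
  obtain ⟨z, hxz⟩ := hasSucc_disjointUnion.1 (hG.hasSucc hpxw hxw hx)
  have hedge : (disjointUnion G).edge none ⟨a, x⟩ ⟨a, z⟩ := ⟨a, x, z, rfl, rfl, hxz⟩
  have hxz_lt := hG.pos_lt hedge
  have hzw : pos ⟨a, z⟩ < pos ⟨b, w⟩ :=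
    lt_of_le_of_ne (not_lt.1 (hG.adjacent hedge hpxw hxw))
      fun h => hab (congrArg Sigma.fst (hG.pos_injective h))
  exact (hmax z ⟨(hG.proc_eq hedge).symm.trans hxp, by omega, hzw⟩).not_gt hxz_lt

theorem IsPartialCBM.exists_color_le [∀ b, Finite (V b)] (hG : (disjointUnion G).IsPartialCBM pos)
    {a b : ι} (hab : a ≠ b) {x : V a} {w : V b} (hp : (G a).proc x = (G b).proc w)
    (hlt : pos ⟨a, x⟩ < pos ⟨b, w⟩) :
    ∃ y j, (G b).color j y ∧ (G b).proc y = (G b).proc w ∧ pos ⟨a, x⟩ < pos ⟨b, y⟩ ∧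
      pos ⟨b, y⟩ ≤ pos ⟨b, w⟩ := by
  obtain ⟨y, ⟨hyp, hxy, hyw⟩, hmin⟩ := Set.exists_min_image
    {y : V b | (G b).proc y = (G b).proc w ∧ pos ⟨a, x⟩ < pos ⟨b, y⟩ ∧ pos ⟨b, y⟩ ≤ pos ⟨b, w⟩}
    (pos ⟨b, ·⟩) (Set.toFinite _) ⟨w, rfl, hlt, le_rfl⟩
  by_cases hy : (G b).Colored y
  · obtain ⟨j, hj⟩ := hy
    exact ⟨y, j, hj, hyp, hxy, hyw⟩
  exfalso
  have hpxy : (disjointUnion G).proc ⟨a, x⟩ = (disjointUnion G).proc ⟨b, y⟩ := hp.trans hyp.symm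
  obtain ⟨z, hzy⟩ := hasPred_disjointUnion.1 (hG.hasPred hpxy hxy hy)
  have hedge : (disjointUnion G).edge none ⟨b, z⟩ ⟨b, y⟩ := ⟨b, z, y, rfl, rfl, hzy⟩
  have hzy_lt := hG.pos_lt hedge
  have hpz := hG.proc_eq hedge
  have hxz : pos ⟨a, x⟩ < pos ⟨b, z⟩ :=
    lt_of_le_of_ne (not_lt.1 fun hzx => hG.adjacent hedge (hpz.trans hpxy.symm) hzx hxy)
      fun h => hab (congrArg Sigma.fst (hG.pos_injective h))
  exact (hmin z ⟨hpz.trans hyp, hxz, by omega⟩).not_gt hzy_lt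

/-- The linearization `q` of the union of the `G' b` is modelled on the linearization `pos` of the
union of the `G b`. -/
structure Glued (G : ∀ b, ColoredGraph A K (V b)) (pos : (Σ b, V b) → ℕ)
    (G' : ∀ b, ColoredGraph A K (V' b)) (q : (Σ b, V' b) → ℕ) : Prop where
  similar : ∀ b, Similar (G b) (pos ∘ Sigma.mk b) (G' b) (q ∘ Sigma.mk b)
  lt_iff_lt_of_color : ∀ {a b i j} {x : V a} {y : V b} {x' : V' a} {y' : V' b},
    (G a).color i x → (G b).color j y → (G' a).color i x' → (G' b).color j y' →
    (pos ⟨a, x⟩ < pos ⟨b, y⟩ ↔ q ⟨a, x'⟩ < q ⟨b, y'⟩)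

theorem Glued.symm (h : Glued G pos G' q) : Glued G' q G pos :=
  ⟨fun b => (h.similar b).symm, fun hx hy hx' hy' => (h.lt_iff_lt_of_color hx' hy' hx hy).symm⟩

theorem Glued.lt_of_lt [∀ b, Finite (V b)] (h : Glued G pos G' q)
    (hG : (disjointUnion G).IsPartialCBM pos)
    (hG' : ∀ b, (G' b).IsPartialCBM (q ∘ Sigma.mk b)) {a b : ι} (hab : a ≠ b) {u : V a} {v : V b}
    {u' : V' a} {v' : V' b}
    (hu : Twin (G a) (pos ∘ Sigma.mk a) (G' a) (q ∘ Sigma.mk a) u u')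
    (hv : Twin (G b) (pos ∘ Sigma.mk b) (G' b) (q ∘ Sigma.mk b) v v')
    (hp : (G a).proc u = (G b).proc v) (hlt : pos ⟨a, u⟩ < pos ⟨b, v⟩) :
    q ⟨a, u'⟩ < q ⟨b, v'⟩ := by
  obtain ⟨x, i, hi, hxp, hux, hxv⟩ := hG.exists_color_ge hab hp hlt
  obtain ⟨y, j, hj, hyp, hxy, hyv⟩ := hG.exists_color_le hab (hxp.trans hp) hxv
  obtain ⟨x', hx⟩ := (h.similar a).2.exists_twin x
  obtain ⟨y', hy⟩ := (h.similar b).2.exists_twin y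
  calc q ⟨a, u'⟩ ≤ q ⟨a, x'⟩ := ((hx.symm.aligned_of_color (hG.of_disjointUnion a) (hG' a) hu
          hi).swap.le_iff hxp.symm).1 hux
    _ < q ⟨b, y'⟩ :=
        (h.lt_iff_lt_of_color hi hj ((hx.color_iff i).2 hi) ((hy.color_iff j).2 hj)).1 hxy
    _ ≤ q ⟨b, v'⟩ := ((hy.symm.aligned_of_color (hG.of_disjointUnion b) (hG' b) hv
          hj).le_iff hyp).1 hyv

theorem Glued.aligned_of_ne [∀ b, Finite (V b)] (h : Glued G pos G' q)
    (hG : (disjointUnion G).IsPartialCBM pos)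
    (hG' : ∀ b, (G' b).IsPartialCBM (q ∘ Sigma.mk b)) (hq : Function.Injective q) {a b : ι}
    (hab : a ≠ b) {u : V a} {v : V b} {u' : V' a} {v' : V' b}
    (hu : Twin (G a) (pos ∘ Sigma.mk a) (G' a) (q ∘ Sigma.mk a) u u')
    (hv : Twin (G b) (pos ∘ Sigma.mk b) (G' b) (q ∘ Sigma.mk b) v v') :
    Aligned (disjointUnion G) pos (disjointUnion G') q ⟨a, u⟩ ⟨b, v⟩ ⟨a, u'⟩ ⟨b, v'⟩ := by
  refine ⟨by simp only [disjointUnion, hu.proc_eq, hv.proc_eq], fun hp => ?_⟩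
  have hlt := h.lt_of_lt hG hG' hab hu hv hp
  have hgt := h.lt_of_lt hG hG' hab.symm hv hu hp.symm
  have hne : pos ⟨a, u⟩ ≠ pos ⟨b, v⟩ := fun he => hab (congrArg Sigma.fst (hG.pos_injective he))
  have hne' : q ⟨a, u'⟩ ≠ q ⟨b, v'⟩ := fun he => hab (congrArg Sigma.fst (hq he))
  exact cmp_eq_cmp_of_lt_iff_lt (by omega) (by omega)

theorem Glued.disjointUnion_color_unique (h : Glued G pos G' q)
    (hG : (disjointUnion G).IsPartialCBM pos)
    (hG' : ∀ b, (G' b).IsPartialCBM (q ∘ Sigma.mk b)) {c : K} {x y : Σ b, V' b}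
    (hx : (disjointUnion G').color c x) (hy : (disjointUnion G').color c y) : x = y := by
  obtain ⟨a, u'⟩ := x
  obtain ⟨b, v'⟩ := y
  obtain ⟨u, hu⟩ := (h.similar a).1.exists_twin u'
  obtain ⟨v, hv⟩ := (h.similar b).1.exists_twin v'
  have huv : (⟨a, u⟩ : Σ b, V b) = ⟨b, v⟩ :=
    hG.color_unique ((hu.color_iff c).2 hx) ((hv.color_iff c).2 hy)
  obtain rfl : a = b := congrArg Sigma.fst huv
  exact congrArg _ ((hG' a).color_unique hx hy)

theorem Glued.compatible [∀ b, Finite (V b)] (h : Glued G pos G' q)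
    (hG : (disjointUnion G).IsPartialCBM pos)
    (hG' : ∀ b, (G' b).IsPartialCBM (q ∘ Sigma.mk b)) (hq : Function.Injective q)
    {d₁ d₂ : A.DS} {e₁ f₁ e₂ f₂ : Σ b, V' b} (h₁ : (disjointUnion G').edge (some d₁) e₁ f₁)
    (h₂ : (disjointUnion G').edge (some d₂) e₂ f₂) : A.Compatible q d₁ e₁ f₁ d₂ e₂ f₂ := by
  obtain ⟨a, e₁, f₁, rfl, rfl, h₁⟩ := h₁
  obtain ⟨b, e₂, f₂, rfl, rfl, h₂⟩ := h₂
  by_cases hab : a = b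
  · subst hab
    exact (Architecture.compatible_comp_iff sigma_mk_injective).1 ((hG' a).compatible h₁ h₂)
  obtain ⟨u₁, v₁, huv₁, hu₁, hv₁⟩ := (h.similar a).1.exists_twin_edge h₁
  obtain ⟨u₂, v₂, huv₂, hu₂, hv₂⟩ := (h.similar b).1.exists_twin_edge h₂
  have edge₁ : (disjointUnion G).edge (some d₁) ⟨a, u₁⟩ ⟨a, v₁⟩ := ⟨a, u₁, v₁, rfl, rfl, huv₁⟩
  have edge₂ : (disjointUnion G).edge (some d₂) ⟨b, u₂⟩ ⟨b, v₂⟩ := ⟨b, u₂, v₂, rfl, rfl, huv₂⟩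
  exact (hG.compatible edge₁ edge₂).transfer hG.pos_injective hq (hG.writer edge₁)
    (hG.reader edge₁) (hG.writer edge₂) (hG.reader edge₂)
    (h.aligned_of_ne hG hG' hq hab hu₁ hu₂) (h.aligned_of_ne hG hG' hq hab hu₁ hv₂)
    (h.aligned_of_ne hG hG' hq hab hv₁ hu₂) (h.aligned_of_ne hG hG' hq hab hv₁ hv₂)

theorem Glued.adjacent [∀ b, Finite (V b)] (h : Glued G pos G' q)
    (hG : (disjointUnion G).IsPartialCBM pos)
    (hG' : ∀ b, (G' b).IsPartialCBM (q ∘ Sigma.mk b)) (hq : Function.Injective q)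
    {x y z : Σ b, V' b} (he : (disjointUnion G').edge none x y)
    (hp : (disjointUnion G').proc x = (disjointUnion G').proc z) (hxz : q x < q z) :
    ¬q z < q y := by
  obtain ⟨a, u', v', rfl, rfl, he⟩ := he
  obtain ⟨b, w'⟩ := z
  by_cases hab : a = b
  · subst hab
    exact (hG' a).adjacent he hp hxz
  obtain ⟨u, v, huv, hu, hv⟩ := (h.similar a).1.exists_twin_edge he
  obtain ⟨w, hw⟩ := (h.similar b).1.exists_twin w'
  have hedge : (disjointUnion G).edge none ⟨a, u⟩ ⟨a, v⟩ := ⟨a, u, v, rfl, rfl, huv⟩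
  have huw := h.aligned_of_ne hG hG' hq hab hu hw
  have hvw := h.aligned_of_ne hG hG' hq hab hv hw
  have hpuw := huw.proc_eq_iff.2 hp
  have hpvw := (hG.proc_eq hedge).symm.trans hpuw
  rw [← hvw.swap.lt_iff hpvw.symm]
  exact hG.adjacent hedge hpuw ((huw.lt_iff hpuw).2 hxz)

theorem Glued.hasPred [∀ b, Finite (V b)] (h : Glued G pos G' q)
    (hG : (disjointUnion G).IsPartialCBM pos)
    (hG' : ∀ b, (G' b).IsPartialCBM (q ∘ Sigma.mk b)) (hq : Function.Injective q)
    {x y : Σ b, V' b} (hp : (disjointUnion G').proc x = (disjointUnion G').proc y)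
    (hlt : q x < q y) (hy : ¬(disjointUnion G').Colored y) : (disjointUnion G').HasPred y := by
  obtain ⟨a, u'⟩ := x
  obtain ⟨b, v'⟩ := y
  refine hasPred_disjointUnion.2 ?_
  by_cases hab : a = b
  · subst hab
    exact (hG' a).hasPred hp hlt hy
  obtain ⟨u, hu⟩ := (h.similar a).1.exists_twin u'
  obtain ⟨v, hv⟩ := (h.similar b).1.exists_twin v'
  have huv := h.aligned_of_ne hG hG' hq hab hu hv
  have hp₀ := huv.proc_eq_iff.2 hp
  exact hv.hasPred_iff.1 (hasPred_disjointUnion.1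
    (hG.hasPred hp₀ ((huv.lt_iff hp₀).2 hlt) (hv.colored_iff.not.2 hy)))

theorem Glued.hasSucc [∀ b, Finite (V b)] (h : Glued G pos G' q)
    (hG : (disjointUnion G).IsPartialCBM pos)
    (hG' : ∀ b, (G' b).IsPartialCBM (q ∘ Sigma.mk b)) (hq : Function.Injective q)
    {x y : Σ b, V' b} (hp : (disjointUnion G').proc x = (disjointUnion G').proc y)
    (hlt : q x < q y) (hx : ¬(disjointUnion G').Colored x) : (disjointUnion G').HasSucc x := by
  obtain ⟨a, u'⟩ := x
  obtain ⟨b, v'⟩ := y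
  refine hasSucc_disjointUnion.2 ?_
  by_cases hab : a = b
  · subst hab
    exact (hG' a).hasSucc hp hlt hx
  obtain ⟨u, hu⟩ := (h.similar a).1.exists_twin u'
  obtain ⟨v, hv⟩ := (h.similar b).1.exists_twin v'
  have huv := h.aligned_of_ne hG hG' hq hab hu hv
  have hp₀ := huv.proc_eq_iff.2 hp
  exact hu.hasSucc_iff.1 (hasSucc_disjointUnion.1
    (hG.hasSucc hp₀ ((huv.lt_iff hp₀).2 hlt) (hu.colored_iff.not.2 hx)))

theorem Glued.isPartialCBM [∀ b, Finite (V b)] (h : Glued G pos G' q)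
    (hG : (disjointUnion G).IsPartialCBM pos)
    (hG' : ∀ b, (G' b).IsPartialCBM (q ∘ Sigma.mk b)) (hq : Function.Injective q) :
    (disjointUnion G').IsPartialCBM q where
  pos_injective := hq
  color_unique := h.disjointUnion_color_unique hG hG'
  color_injective {_ _ x} := (hG' x.1).color_injective
  pos_lt := by
    rintro γ _ _ ⟨b, u, v, rfl, rfl, he⟩
    exact (hG' b).pos_lt he
  proc_eq := by
    rintro _ _ ⟨b, u, v, rfl, rfl, he⟩
    exact (hG' b).proc_eq he
  adjacent := h.adjacent hG hG' hq
  hasPred := h.hasPred hG hG' hq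
  hasSucc := h.hasSucc hG hG' hq
  writer := by
    rintro d _ _ ⟨b, u, v, rfl, rfl, he⟩
    exact (hG' b).writer he
  reader := by
    rintro d _ _ ⟨b, u, v, rfl, rfl, he⟩
    exact (hG' b).reader he
  compatible := h.compatible hG hG' hq

theorem Glued.aligned_of_color [∀ b, Finite (V b)] (h : Glued G pos G' q)
    (hG : (disjointUnion G).IsPartialCBM pos) (hG' : (disjointUnion G').IsPartialCBM q)
    {a b : ι} {u : V a} {v : V b} {u' : V' a} {v' : V' b}
    (hu : Twin (G a) (pos ∘ Sigma.mk a) (G' a) (q ∘ Sigma.mk a) u u')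
    (hv : Twin (G b) (pos ∘ Sigma.mk b) (G' b) (q ∘ Sigma.mk b) v v') {c : K}
    (hc : (G a).color c u) :
    Aligned (disjointUnion G) pos (disjointUnion G') q ⟨a, u⟩ ⟨b, v⟩ ⟨a, u'⟩ ⟨b, v'⟩ := by
  by_cases hab : a = b
  · subst hab
    have := hu.aligned_of_color (hG.of_disjointUnion a) (hG'.of_disjointUnion a) hv hc
    exact ⟨this.proc_eq_iff, this.cmp_eq⟩
  · exact h.aligned_of_ne hG hG'.of_disjointUnion hG'.pos_injective hab hu hv

theorem Glued.twin [∀ b, Finite (V b)] (h : Glued G pos G' q)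
    (hG : (disjointUnion G).IsPartialCBM pos) (hG' : (disjointUnion G').IsPartialCBM q)
    {b : ι} {v : V b} {v' : V' b}
    (hv : Twin (G b) (pos ∘ Sigma.mk b) (G' b) (q ∘ Sigma.mk b) v v') :
    Twin (disjointUnion G) pos (disjointUnion G') q ⟨b, v⟩ ⟨b, v'⟩ where
  proc_eq := hv.proc_eq
  color_iff := hv.color_iff
  mem_lower_iff c := by
    constructor
    · rintro ⟨⟨a, x⟩, hx, hp, hle⟩
      obtain ⟨x', hxx'⟩ := (h.similar a).2.exists_twin x
      have halign := h.aligned_of_color hG hG' hxx'.symm hv hx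
      exact ⟨⟨a, x'⟩, (hxx'.color_iff c).2 hx, halign.proc_eq_iff.1 hp, (halign.le_iff hp).1 hle⟩
    · rintro ⟨⟨a, x'⟩, hx', hp, hle⟩
      obtain ⟨x, hxx'⟩ := (h.similar a).1.exists_twin x'
      have hx := (hxx'.color_iff c).2 hx'
      have halign := h.aligned_of_color hG hG' hxx' hv hx
      have hp₀ := halign.proc_eq_iff.2 hp
      exact ⟨⟨a, x⟩, hx, hp₀, (halign.le_iff hp₀).2 hle⟩
  hasPred_iff := by rw [hasPred_disjointUnion, hasPred_disjointUnion, hv.hasPred_iff]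
  hasSucc_iff := by rw [hasSucc_disjointUnion, hasSucc_disjointUnion, hv.hasSucc_iff]

theorem Glued.colorLT_of_colorLT (h : Glued G pos G' q) {p : A.Procs} {c c' : K}
    (hlt : (disjointUnion G).colorLT pos p c c') : (disjointUnion G').colorLT q p c c' := by
  obtain ⟨⟨a, u⟩, ⟨b, v⟩, hu, hv, hp, hlt⟩ := hlt
  obtain ⟨u', hu'⟩ := (h.similar a).2.exists_twin u
  obtain ⟨v', hv'⟩ := (h.similar b).2.exists_twin v
  have hc := (hu'.color_iff c).2 hu
  have hc' := (hv'.color_iff c').2 hv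
  exact ⟨⟨a, u'⟩, ⟨b, v'⟩, hc, hc', hu'.proc_eq.trans hp,
    (h.lt_iff_lt_of_color hu hv hc hc').1 hlt⟩

theorem Glued.covers [∀ b, Finite (V b)] (h : Glued G pos G' q)
    (hG : (disjointUnion G).IsPartialCBM pos) (hG' : (disjointUnion G').IsPartialCBM q) :
    Covers (disjointUnion G) pos (disjointUnion G') q where
  colorLT_iff _ _ _ := ⟨h.colorLT_of_colorLT, h.symm.colorLT_of_colorLT⟩
  exists_twin := by
    rintro ⟨b, v'⟩
    obtain ⟨v, hv⟩ := (h.similar b).1.exists_twin v'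
    exact ⟨⟨b, v⟩, h.twin hG hG' hv⟩
  exists_twin_edge := by
    rintro γ _ _ ⟨b, u', v', rfl, rfl, he⟩
    obtain ⟨u, v, huv, hu, hv⟩ := (h.similar b).1.exists_twin_edge he
    exact ⟨⟨b, u⟩, ⟨b, v⟩, ⟨b, u, v, rfl, rfl, huv⟩, h.twin hG hG' hu, h.twin hG hG' hv⟩

variable {pos' : ∀ b, V' b → ℕ}

/-- The relation that a linearization of the union of the `G' b` has to contain in order to extend
each `pos' b` and to order the colored vertices as `pos` does. -/
inductive GluedLT (G : ∀ b, ColoredGraph A K (V b)) (pos : (Σ b, V b) → ℕ)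
    (G' : ∀ b, ColoredGraph A K (V' b)) (pos' : ∀ b, V' b → ℕ) : (Σ b, V' b) → (Σ b, V' b) → Prop
  | inner {b} {u v : V' b} (hlt : pos' b u < pos' b v) : GluedLT G pos G' pos' ⟨b, u⟩ ⟨b, v⟩
  | cross {a b i j} {x : V a} {y : V b} {u x' : V' a} {y' v : V' b}
      (hx : (G a).color i x) (hx' : (G' a).color i x') (hy : (G b).color j y)
      (hy' : (G' b).color j y') (hux : pos' a u ≤ pos' a x') (hxy : pos ⟨a, x⟩ < pos ⟨b, y⟩)
      (hyv : pos' b y' ≤ pos' b v) : GluedLT G pos G' pos' ⟨a, u⟩ ⟨b, v⟩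

theorem isStrictOrder_gluedLT (hG : ∀ b, (G b).IsPartialCBM (pos ∘ Sigma.mk b))
    (hG' : ∀ b, (G' b).IsPartialCBM (pos' b))
    (hs : ∀ b, Covers (G b) (pos ∘ Sigma.mk b) (G' b) (pos' b)) :
    IsStrictOrder (Σ b, V' b) (GluedLT G pos G' pos') := by
  have le_of_le {b i j} {x y : V b} {x' y' : V' b} (hx : (G b).color i x) (hy : (G b).color j y)
      (hx' : (G' b).color i x') (hy' : (G' b).color j y') (hle : pos' b x' ≤ pos' b y') :
      pos ⟨b, x⟩ ≤ pos ⟨b, y⟩ :=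
    not_lt.1 fun hlt =>
      hle.not_gt (((hs b).lt_iff_lt_of_color (hG b) (hG' b) hy hx hy' hx').1 hlt)
  refine { irrefl := fun x h => ?_, trans := fun x y z hxy hyz => ?_ }
  · cases h with
    | inner hlt => exact lt_irrefl _ hlt
    | cross hx hx' hy hy' hux hxy hyu =>
      exact hxy.not_ge (le_of_le hy hx hy' hx' (hyu.trans hux))
  · cases hxy with
    | inner hlt =>
      cases hyz with
      | inner hlt' => exact .inner (hlt.trans hlt')
      | cross hx hx' hy hy' hux hxy hyv => exact .cross hx hx' hy hy' (hlt.le.trans hux) hxy hyv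
    | cross hx hx' hy hy' hux hxy hyv =>
      cases hyz with
      | inner hlt => exact .cross hx hx' hy hy' hux hxy (hyv.trans hlt.le)
      | cross hz hz' hw hw' hvz hzw hwt =>
        have hyz := le_of_le hy hz hy' hz' (hyv.trans hvz)
        exact .cross hx hx' hw hw' hux (hxy.trans_le hyz |>.trans hzw) hwt

theorem exists_glued [Finite ι] [∀ b, Finite (V' b)] (hG : (disjointUnion G).IsPartialCBM pos)
    (hG' : ∀ b, (G' b).IsPartialCBM (pos' b))
    (hs : ∀ b, Similar (G b) (pos ∘ Sigma.mk b) (G' b) (pos' b)) :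
    ∃ q, Function.Injective q ∧ (∀ b, (G' b).IsPartialCBM (q ∘ Sigma.mk b)) ∧
      Glued G pos G' q := by
  have := isStrictOrder_gluedLT hG.of_disjointUnion hG' fun b => (hs b).1
  obtain ⟨q, hq, hmono⟩ := exists_injective_nat_of_isStrictOrder (GluedLT G pos G' pos')
  have hinner (b : ι) (u v : V' b) : q ⟨b, u⟩ < q ⟨b, v⟩ ↔ pos' b u < pos' b v := by
    have hle_of_le : pos' b v ≤ pos' b u → q ⟨b, v⟩ ≤ q ⟨b, u⟩ := fun hle =>
      hle.eq_or_lt.elim (fun he => (congrArg q (congrArg _ ((hG' b).pos_injective he))).le)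
        fun hlt => (hmono _ _ (.inner hlt)).le
    exact ⟨fun h => not_le.1 fun hle => (hle_of_le hle).not_gt h, fun h => hmono _ _ (.inner h)⟩
  refine ⟨q, hq, fun b => (hG' b).congr_pos (hinner b), fun b => (hs b).congr_pos (hinner b), ?_⟩
  intro a b i j x y x' y' hx hy hx' hy'
  refine ⟨fun hlt => hmono _ _ (.cross hx hx' hy hy' le_rfl hlt le_rfl), fun hlt => ?_⟩
  refine not_le.1 fun hle => ?_
  rcases hle.eq_or_lt with he | hgt
  · obtain ⟨rfl, hyx⟩ := Sigma.mk.inj_iff.1 (hG.pos_injective he)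
    obtain rfl := eq_of_heq hyx
    obtain rfl := (hG.of_disjointUnion b).color_injective hx hy
    exact hlt.ne (congrArg (q ⟨b, ·⟩) ((hG' b).color_unique hx' hy'))
  · exact hlt.not_gt (hmono _ _ (.cross hy hy' hx hx' le_rfl hgt le_rfl))

theorem IsPartialCBM.exists_disjointUnion_of_similar [Finite ι] [∀ b, Finite (V b)]
    [∀ b, Finite (V' b)] (hG : (disjointUnion G).IsPartialCBM pos)
    (hG' : ∀ b, (G' b).IsPartialCBM (pos' b))
    (hs : ∀ b, Similar (G b) (pos ∘ Sigma.mk b) (G' b) (pos' b)) :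
    ∃ q, (disjointUnion G').IsPartialCBM q ∧
      Similar (disjointUnion G) pos (disjointUnion G') q := by
  obtain ⟨q, hq, hG'q, hglued⟩ := exists_glued hG hG' hs
  have hunion := hglued.isPartialCBM hG hG'q hq
  exact ⟨q, hunion, hglued.covers hG hunion, hglued.symm.covers hunion hG⟩

end ColoredGraph

/-! ### Summaries -/

/-- What the operations can see of a vertex of a colored graph besides its process: the last color
occurring on its process at or before it, whether it is colored, and whether it has a process
predecessor and a process successor. -/
abbrev Shape (K : Type*) : Type _ := Option K × Prop × Prop × Prop

/-- The elementary facts that make up the summary of a linearized colored graph. -/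
inductive Feature (A : Architecture) (K : Type*)
  | colorLT (p : A.Procs) (c c' : K)
  | vertex (p : A.Procs) (s : Shape K)
  | succ (p : A.Procs) (s t : Shape K)
  | matching (d : A.DS) (s t : Shape K)

namespace Feature

/-- Features as elements of a sum of products, for counting them. -/
def equivSum (A : Architecture) (K : Type*) :
    Feature A K ≃ (A.Procs × K × K) ⊕ (A.Procs × Shape K) ⊕ (A.Procs × Shape K × Shape K) ⊕
      (A.DS × Shape K × Shape K) where
  toFun
    | colorLT p c c' => .inl (p, c, c')
    | vertex p s => .inr (.inl (p, s))
    | succ p s t => .inr (.inr (.inl (p, s, t)))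
    | matching d s t => .inr (.inr (.inr (d, s, t)))
  invFun
    | .inl (p, c, c') => colorLT p c c'
    | .inr (.inl (p, s)) => vertex p s
    | .inr (.inr (.inl (p, s, t))) => succ p s t
    | .inr (.inr (.inr (d, s, t))) => matching d s t
  left_inv := by rintro (_ | _ | _ | _) <;> rfl
  right_inv := by rintro (_ | _ | _ | _) <;> rfl

instance {A : Architecture} {K : Type*} [Finite K] : Finite (Feature A K) :=
  Finite.of_equiv _ (equivSum A K).symm

-- `273 = 1 + 16 + 256`: there are at most `16 * Nat.card K` shapes.
theorem card_le (A : Architecture) (K : Type*) [Finite K] (hK : 1 ≤ Nat.card K) :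
    Nat.card (Feature A K) ≤
      273 * Nat.card K ^ 2 * (Fintype.card A.Procs + Fintype.card A.DS) := by
  have hshape : Nat.card (Shape K) ≤ 16 * Nat.card K := by
    simp only [Nat.card_prod, Finite.card_option, Nat.card_eq_fintype_card (α := Prop),
      Fintype.card_prop]
    omega
  have hpair : Nat.card (Shape K) * Nat.card (Shape K) ≤ 256 * Nat.card K ^ 2 :=
    (Nat.mul_le_mul hshape hshape).trans_eq (by ring)
  have hle_sq : Nat.card K ≤ Nat.card K ^ 2 := Nat.le_self_pow two_ne_zero _
  rw [Nat.card_congr (equivSum A K)]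
  simp only [Nat.card_sum, Nat.card_prod (α := A.Procs), Nat.card_prod (α := A.DS),
    Nat.card_prod (α := K), Nat.card_prod (α := Shape K), Nat.card_eq_fintype_card (α := A.Procs),
    Nat.card_eq_fintype_card (α := A.DS)]
  nlinarith [Nat.mul_le_mul_left (Fintype.card A.Procs) hshape,
    Nat.mul_le_mul_left (Fintype.card A.Procs) hpair,
    Nat.mul_le_mul_left (Fintype.card A.Procs) hle_sq,
    Nat.mul_le_mul_left (Fintype.card A.DS) hpair]

end Feature

namespace ColoredGraph

variable {A : Architecture} {K V V' : Type*}

/-- `n` is the last color on the process of `v` at or before `v`. -/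
def IsLast (G : ColoredGraph A K V) (pos : V → ℕ) (v : V) (n : K) : Prop :=
  n ∈ G.lower pos v ∧ ∀ c ∈ G.lower pos v, ¬G.colorLT pos (G.proc v) n c

open Classical in
/-- The last color on the process of `v` at or before `v`, if any. -/
noncomputable def last (G : ColoredGraph A K V) (pos : V → ℕ) (v : V) : Option K :=
  if h : ∃ n, G.IsLast pos v n then some h.choose else none

/-- The shape of a vertex of a linearized colored graph. -/
noncomputable def shape (G : ColoredGraph A K V) (pos : V → ℕ) (v : V) : Shape K :=
  (G.last pos v, G.Colored v, G.HasPred v, G.HasSucc v)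

/-- The features present in a linearized colored graph. -/
def HasFeature (G : ColoredGraph A K V) (pos : V → ℕ) : Feature A K → Prop
  | .colorLT p c c' => G.colorLT pos p c c'
  | .vertex p s => ∃ v, G.proc v = p ∧ G.shape pos v = s
  | .succ p s t => ∃ u v, G.edge none u v ∧ G.proc u = p ∧ G.shape pos u = s ∧ G.shape pos v = t
  | .matching d s t => ∃ e f, G.edge (some d) e f ∧ G.shape pos e = s ∧ G.shape pos f = t

/-- The summary of a linearized colored graph, which serves as the state of the automaton. -/
def summary (G : ColoredGraph A K V) (pos : V → ℕ) : Set (Feature A K) := {φ | G.HasFeature pos φ}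

variable {G : ColoredGraph A K V} {G' : ColoredGraph A K V'} {pos : V → ℕ} {pos' : V' → ℕ}

theorem IsPartialCBM.isLast_unique (hG : G.IsPartialCBM pos) {v : V} {m n : K}
    (hm : G.IsLast pos v m) (hn : G.IsLast pos v n) : m = n := by
  obtain ⟨x, hx, hxp, -⟩ := hm.1
  obtain ⟨y, hy, hyp, -⟩ := hn.1
  have hxy := hm.2 n hn.1
  have hyx := hn.2 m hm.1
  rw [hG.colorLT_iff hx hy] at hxy
  rw [hG.colorLT_iff hy hx] at hyx
  have hpos : pos x = pos y := by
    simp only [hxp, hyp, true_and, not_lt] at hxy hyx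
    omega
  exact hG.color_injective hx (hG.pos_injective hpos ▸ hy)

theorem IsPartialCBM.last_eq_some_iff (hG : G.IsPartialCBM pos) {v : V} {n : K} :
    G.last pos v = some n ↔ G.IsLast pos v n := by
  unfold last
  split_ifs with h
  · rw [Option.some_inj]
    exact ⟨fun he => he ▸ h.choose_spec, hG.isLast_unique h.choose_spec⟩
  · exact iff_of_false (by simp) fun hn => h ⟨n, hn⟩

theorem IsPartialCBM.exists_isLast [Finite V] (hG : G.IsPartialCBM pos) {v : V} {c : K}
    (hc : c ∈ G.lower pos v) : ∃ n, G.IsLast pos v n := by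
  obtain ⟨x, hx, hxp, hxv⟩ := hc
  obtain ⟨y, ⟨⟨n, hn⟩, hyp, hyv⟩, hmax⟩ := Set.exists_max_image
    {y | G.Colored y ∧ G.proc y = G.proc v ∧ pos y ≤ pos v} pos (Set.toFinite _)
    ⟨x, ⟨c, hx⟩, hxp, hxv⟩
  refine ⟨n, ⟨y, hn, hyp, hyv⟩, fun c' ⟨z, hz, hzp, hzv⟩ => ?_⟩
  rw [hG.colorLT_iff hn hz]
  exact fun h => (hmax z ⟨⟨c', hz⟩, hzp, hzv⟩).not_gt h.2

theorem IsPartialCBM.mem_lower_iff_last [Finite V] (hG : G.IsPartialCBM pos) {v : V} {c : K} :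
    c ∈ G.lower pos v ↔
      ∃ n, G.last pos v = some n ∧ (c = n ∨ G.colorLT pos (G.proc v) c n) := by
  simp only [hG.last_eq_some_iff]
  constructor
  · intro hc
    obtain ⟨n, hn⟩ := hG.exists_isLast hc
    have hnx := hn.2 c hc
    obtain ⟨x, hx, hxp, -⟩ := hc
    obtain ⟨y, hy, hyp, -⟩ := hn.1
    rw [hG.colorLT_iff hy hx, and_iff_right hyp, not_lt] at hnx
    refine ⟨n, hn, hnx.eq_or_lt.imp (fun he => ?_) fun hlt => ⟨x, y, hx, hy, hxp, hlt⟩⟩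
    exact hG.color_injective hx (hG.pos_injective he ▸ hy)
  · rintro ⟨n, hn, rfl | ⟨x, y, hx, hy, hxp, hxy⟩⟩
    · exact hn.1
    · exact ⟨x, hx, hxp, hxy.le.trans ((hG.mem_lower_iff hy).1 hn.1).2⟩

theorem IsPartialCBM.color_iff_last (hG : G.IsPartialCBM pos) {v : V} {c : K} :
    G.color c v ↔ G.Colored v ∧ G.last pos v = some c := by
  have hlast {c : K} (hc : G.color c v) : G.last pos v = some c := by
    refine hG.last_eq_some_iff.2 ⟨⟨v, hc, rfl, le_rfl⟩, fun c' ⟨x, hx, _, hxv⟩ => ?_⟩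
    rw [hG.colorLT_iff hc hx]
    exact fun h => h.2.not_ge hxv
  refine ⟨fun hc => ⟨⟨c, hc⟩, hlast hc⟩, fun ⟨⟨c', hc'⟩, hc⟩ => ?_⟩
  obtain rfl : c' = c := Option.some_inj.1 ((hlast hc').symm.trans hc)
  exact hc'

theorem Twin.last_eq (hG : G.IsPartialCBM pos) (hG' : G'.IsPartialCBM pos')
    (hlt : ∀ p c c', G.colorLT pos p c c' ↔ G'.colorLT pos' p c c') {v : V} {v' : V'}
    (h : Twin G pos G' pos' v v') : G.last pos v = G'.last pos' v' := by
  ext n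
  simp only [hG.last_eq_some_iff, hG'.last_eq_some_iff, IsLast, h.mem_lower_iff, hlt, h.proc_eq]

theorem twin_iff_shape_eq [Finite V] [Finite V'] (hG : G.IsPartialCBM pos)
    (hG' : G'.IsPartialCBM pos') (hlt : ∀ p c c', G.colorLT pos p c c' ↔ G'.colorLT pos' p c c')
    {v : V} {v' : V'} :
    Twin G pos G' pos' v v' ↔ G.proc v = G'.proc v' ∧ G.shape pos v = G'.shape pos' v' := by
  simp only [shape, Prod.mk.injEq, eq_iff_iff]
  constructor
  · exact fun h => ⟨h.proc_eq, h.last_eq hG hG' hlt, h.colored_iff, h.hasPred_iff, h.hasSucc_iff⟩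
  · rintro ⟨hproc, hlast, hcolored, hpred, hsucc⟩
    refine ⟨hproc, fun c => ?_, fun c => ?_, hpred, hsucc⟩
    · rw [hG.color_iff_last, hG'.color_iff_last, hcolored, hlast]
    · simp only [hG.mem_lower_iff_last, hG'.mem_lower_iff_last, hlast, hproc, hlt]

theorem covers_of_summary_eq [Finite V] [Finite V'] (hG : G.IsPartialCBM pos)
    (hG' : G'.IsPartialCBM pos') (h : G.summary pos = G'.summary pos') :
    Covers G pos G' pos' := by
  have hlt (p : A.Procs) (c c' : K) : G.colorLT pos p c c' ↔ G'.colorLT pos' p c c' :=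
    Set.ext_iff.1 h (.colorLT p c c')
  have hsub (φ : Feature A K) : G'.HasFeature pos' φ → G.HasFeature pos φ :=
    (Set.ext_iff.1 h φ).2
  have htwin {v : V} {v' : V'} (hp : G.proc v = G'.proc v')
      (hs : G.shape pos v = G'.shape pos' v') := (twin_iff_shape_eq hG hG' hlt).2 ⟨hp, hs⟩
  refine ⟨hlt, fun v' => ?_, fun {γ u' v'} he => ?_⟩
  · obtain ⟨v, hp, hv⟩ := hsub (.vertex _ _) ⟨v', rfl, rfl⟩
    exact ⟨v, htwin hp hv⟩
  cases γ with
  | none =>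
    obtain ⟨u, v, huv, hp, hu, hv⟩ := hsub (.succ _ _ _) ⟨u', v', he, rfl, rfl, rfl⟩
    have hp' : G.proc v = G'.proc v' := by rw [← hG.proc_eq huv, hp, hG'.proc_eq he]
    exact ⟨u, v, huv, htwin hp hu, htwin hp' hv⟩
  | some d =>
    obtain ⟨u, v, huv, hu, hv⟩ := hsub (.matching _ _ _) ⟨u', v', he, rfl, rfl⟩
    exact ⟨u, v, huv, htwin (by rw [hG.writer huv, hG'.writer he]) hu,
      htwin (by rw [hG.reader huv, hG'.reader he]) hv⟩

theorem Covers.summary_subset [Finite V] [Finite V'] (hG : G.IsPartialCBM pos)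
    (hG' : G'.IsPartialCBM pos') (h : Covers G pos G' pos') :
    G'.summary pos' ⊆ G.summary pos := by
  have htwin {v : V} {v' : V'} (hv : Twin G pos G' pos' v v') :=
    (twin_iff_shape_eq hG hG' h.colorLT_iff).1 hv
  rintro (⟨p, c, c'⟩ | ⟨p, s⟩ | ⟨p, s, t⟩ | ⟨d, s, t⟩)
  · exact (h.colorLT_iff p c c').2
  · rintro ⟨v', rfl, rfl⟩
    obtain ⟨v, hv⟩ := h.exists_twin v'
    exact ⟨v, htwin hv⟩
  · rintro ⟨u', v', he, rfl, rfl, rfl⟩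
    obtain ⟨u, v, huv, hu, hv⟩ := h.exists_twin_edge he
    exact ⟨u, v, huv, hu.proc_eq, (htwin hu).2, (htwin hv).2⟩
  · rintro ⟨u', v', he, rfl, rfl⟩
    obtain ⟨u, v, huv, hu, hv⟩ := h.exists_twin_edge he
    exact ⟨u, v, huv, (htwin hu).2, (htwin hv).2⟩

theorem summary_eq_iff_similar [Finite V] [Finite V'] (hG : G.IsPartialCBM pos)
    (hG' : G'.IsPartialCBM pos') :
    G.summary pos = G'.summary pos' ↔ Similar G pos G' pos' :=
  ⟨fun h => ⟨covers_of_summary_eq hG hG' h, covers_of_summary_eq hG' hG h.symm⟩,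
    fun h => (h.2.summary_subset hG' hG).antisymm (h.1.summary_subset hG hG')⟩

end ColoredGraph

/-! ### The automaton -/

namespace ColoredGraph

variable {A : Architecture} {K V V' : Type*}

/-- The single vertex on process `p`, colored `i`. -/
def atom (p : A.Procs) (i : K) : ColoredGraph A K Unit where
  proc _ := p
  edge _ _ _ := False
  color c _ := c = i

/-- The two-element family of vertex types underlying a binary `⊕`. -/
abbrev Pair (V W : Type) : Bool → Type
  | false => V
  | true => W

/-- The two-element family of graphs underlying a binary `⊕`. -/
def pair {V W : Type} (G : ColoredGraph A K V) (H : ColoredGraph A K W) :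
    ∀ b, ColoredGraph A K (Pair V W b)
  | false => G
  | true => H

instance finite_pair {V W : Type} [Finite V] [Finite W] : ∀ b, Finite (Pair V W b)
  | false => ‹Finite V›
  | true => ‹Finite W›

/-- `G` has a linearization with summary `s` that makes it a partial CBM. -/
def Admits (G : ColoredGraph A K V) (s : Set (Feature A K)) : Prop :=
  ∃ pos, G.IsPartialCBM pos ∧ G.summary pos = s

/-- Applying the operation `F` can turn summary `s` into summary `t`, as witnessed by some finite
graph. -/
def UnaryStep (F : ∀ V : Type, ColoredGraph A K V → ColoredGraph A K V)
    (s t : Set (Feature A K)) : Prop :=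
  ∃ (V : Type) (_ : Finite V) (G : ColoredGraph A K V) (pos : V → ℕ), G.IsPartialCBM pos ∧
    (F V G).IsPartialCBM pos ∧ G.summary pos = s ∧ (F V G).summary pos = t

/-- The operation `⊕` can produce summary `t` from summaries `s₁` and `s₂`, as witnessed by some
finite graphs. -/
def UnionStep (s₁ s₂ t : Set (Feature A K)) : Prop :=
  ∃ (V : Bool → Type) (_ : ∀ b, Finite (V b)) (G : ∀ b, ColoredGraph A K (V b))
    (pos : (Σ b, V b) → ℕ), (disjointUnion G).IsPartialCBM pos ∧
    (G false).summary (pos ∘ Sigma.mk false) = s₁ ∧ (G true).summary (pos ∘ Sigma.mk true) = s₂ ∧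
    (disjointUnion G).summary pos = t

variable {s t s₁ s₂ : Set (Feature A K)}

theorem Admits.add [Finite V'] {G' : ColoredGraph A K V'} {γ : Option A.DS} {i j : K}
    (h : G'.Admits s) (hstep : UnaryStep (fun _ => add γ i j) s t) : (G'.add γ i j).Admits t := by
  obtain ⟨pos', hG', rfl⟩ := h
  obtain ⟨V, _, G, pos, hG, hadd, hs, rfl⟩ := hstep
  have hsim := (summary_eq_iff_similar hG hG').1 hs
  have hadd' := hadd.add_of_covers hG' hsim.1
  exact ⟨pos', hadd', ((summary_eq_iff_similar hadd hadd').2 hsim.add).symm⟩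

theorem Admits.forget [Finite V'] {G' : ColoredGraph A K V'} {i : K}
    (h : G'.Admits s) (hstep : UnaryStep (fun _ => forget i) s t) : (G'.forget i).Admits t := by
  obtain ⟨pos', hG', rfl⟩ := h
  obtain ⟨V, _, G, pos, hG, hforget, hs, rfl⟩ := hstep
  have hsim := (summary_eq_iff_similar hG hG').1 hs
  have hforget' := hG.forget_of_covers hforget hG' hsim.1
  exact ⟨pos', hforget', ((summary_eq_iff_similar hforget hforget').2 hsim.forget).symm⟩

theorem Admits.disjointUnion_pair {W₁ W₂ : Type} [Finite W₁] [Finite W₂] {H₁ : ColoredGraph A K W₁}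
    {H₂ : ColoredGraph A K W₂} (h₁ : H₁.Admits s₁) (h₂ : H₂.Admits s₂)
    (hstep : UnionStep s₁ s₂ t) : (disjointUnion (pair H₁ H₂)).Admits t := by
  obtain ⟨V, _, G, pos, hG, hs₁, hs₂, rfl⟩ := hstep
  have hadmits : ∀ b, (pair H₁ H₂ b).Admits ((G b).summary (pos ∘ Sigma.mk b))
    | false => hs₁ ▸ h₁
    | true => hs₂ ▸ h₂
  choose pos' hG' hs using hadmits
  have hsim (b : Bool) := (summary_eq_iff_similar (hG.of_disjointUnion b) (hG' b)).1 (hs b).symm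
  obtain ⟨q, hq, hsim⟩ := hG.exists_disjointUnion_of_similar hG' hsim
  exact ⟨q, hq, ((summary_eq_iff_similar hG hq).2 hsim).symm⟩

end ColoredGraph

namespace STT

open ColoredGraph

/-- The vertices of the graph denoted by a term. -/
def Vertex {Vl El : Type} : STT Vl El → Type
  | atom _ _ => Unit
  | add _ _ _ τ => τ.Vertex
  | forget _ τ => τ.Vertex
  | plus τ₁ τ₂ => Σ b, Pair τ₁.Vertex τ₂.Vertex b

instance finite_vertex {Vl El : Type} : ∀ τ : STT Vl El, Finite τ.Vertex
  | atom _ _ => inferInstanceAs (Finite Unit)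
  | add _ _ _ τ => finite_vertex τ
  | forget _ τ => finite_vertex τ
  | plus τ₁ τ₂ =>
    have := finite_vertex τ₁
    have := finite_vertex τ₂
    inferInstanceAs (Finite (Σ b, Pair τ₁.Vertex τ₂.Vertex b))

variable {A : Architecture} {Alph : Type} {k : ℕ}

/-- The colored graph denoted by a valid term. -/
def coloredGraph : ∀ τ : STT (Alph × A.Procs) (Option A.DS), τ.Valid k →
    ColoredGraph A (Set.Icc 1 k) τ.Vertex
  | atom i x, h => ColoredGraph.atom x.2 ⟨i, h⟩
  | add γ i j τ, h =>
    (coloredGraph τ h.2.2.2.2).add γ ⟨i, h.1, h.2.1⟩ ⟨j, h.2.2.1, h.2.2.2.1⟩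
  | forget i τ, h => (coloredGraph τ h.2.2).forget ⟨i, h.1, h.2.1⟩
  | plus τ₁ τ₂, h => disjointUnion (pair (coloredGraph τ₁ h.1) (coloredGraph τ₂ h.2.1))

theorem mem_Icc_of_mem_activeColors {τ : STT (Alph × A.Procs) (Option A.DS)} (h : τ.Valid k)
    {i : ℕ} (hi : i ∈ τ.activeColors) : i ∈ Set.Icc 1 k := by
  induction τ with
  | atom j x => exact hi ▸ h
  | add γ j l τ ih => exact ih h.2.2.2.2 hi
  | forget j τ ih => exact ih h.2.2 hi.1
  | plus τ₁ τ₂ ih₁ ih₂ => exact hi.elim (ih₁ h.1) (ih₂ h.2.1)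

theorem exists_color_iff_mem_activeColors {τ : STT (Alph × A.Procs) (Option A.DS)}
    (h : τ.Valid k) (c : Set.Icc 1 k) :
    (∃ v, (τ.coloredGraph h).color c v) ↔ c.1 ∈ τ.activeColors := by
  induction τ with
  | atom i x => exact ⟨fun ⟨_, hc⟩ => congrArg Subtype.val hc, fun hc => ⟨(), Subtype.ext hc⟩⟩
  | add γ i j τ ih => exact ih h.2.2.2.2
  | forget i τ ih =>
    rw [activeColors, Set.mem_sdiff, ← ih h.2.2, and_comm, ← exists_and_left]
    exact exists_congr fun v => and_congr_left' (Subtype.ext_iff.not)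
  | plus τ₁ τ₂ ih₁ ih₂ =>
    rw [activeColors, Set.mem_union, ← ih₁ h.1, ← ih₂ h.2.1]
    constructor
    · rintro ⟨⟨_ | _, v⟩, hv⟩
      · exact .inl ⟨v, hv⟩
      · exact .inr ⟨v, hv⟩
    · rintro (⟨v, hv⟩ | ⟨v, hv⟩)
      · exact ⟨⟨false, v⟩, hv⟩
      · exact ⟨⟨true, v⟩, hv⟩

theorem coloredGraph_color_unique {τ : STT (Alph × A.Procs) (Option A.DS)} (h : τ.Valid k)
    {c : Set.Icc 1 k} {u v : τ.Vertex} (hu : (τ.coloredGraph h).color c u)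
    (hv : (τ.coloredGraph h).color c v) : u = v := by
  induction τ with
  | atom i x => rfl
  | add γ i j τ ih => exact ih h.2.2.2.2 hu hv
  | forget i τ ih => exact ih h.2.2 hu.2 hv.2
  | plus τ₁ τ₂ ih₁ ih₂ =>
    have hdisj {u : τ₁.Vertex} {v : τ₂.Vertex} (hu : (τ₁.coloredGraph h.1).color c u)
        (hv : (τ₂.coloredGraph h.2.1).color c v) : False :=
      Set.disjoint_left.1 h.2.2 ((exists_color_iff_mem_activeColors h.1 c).1 ⟨u, hu⟩)
        ((exists_color_iff_mem_activeColors h.2.1 c).1 ⟨v, hv⟩)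
    rcases u with ⟨_ | _, u⟩ <;> rcases v with ⟨_ | _, v⟩
    · exact congrArg _ (ih₁ h.1 hu hv)
    · exact (hdisj hu hv).elim
    · exact (hdisj hv hu).elim
    · exact congrArg _ (ih₂ h.2.1 hu hv)

theorem coloredGraph_color_injective {τ : STT (Alph × A.Procs) (Option A.DS)} (h : τ.Valid k)
    {c c' : Set.Icc 1 k} {v : τ.Vertex} (hc : (τ.coloredGraph h).color c v)
    (hc' : (τ.coloredGraph h).color c' v) : c = c' := by
  induction τ with
  | atom i x => exact hc.trans hc'.symm
  | add γ i j τ ih => exact ih h.2.2.2.2 hc hc'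
  | forget i τ ih => exact ih h.2.2 hc.2 hc'.2
  | plus τ₁ τ₂ ih₁ ih₂ =>
    rcases v with ⟨_ | _, v⟩
    · exact ih₁ h.1 hc hc'
    · exact ih₂ h.2.1 hc hc'

theorem disjoint_activeColors_of_color_unique {τ₁ τ₂ : STT (Alph × A.Procs) (Option A.DS)}
    (h₁ : τ₁.Valid k) (h₂ : τ₂.Valid k)
    (h : ∀ {c x y}, (disjointUnion (pair (τ₁.coloredGraph h₁) (τ₂.coloredGraph h₂))).color c x →
      (disjointUnion (pair (τ₁.coloredGraph h₁) (τ₂.coloredGraph h₂))).color c y → x = y) :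
    Disjoint τ₁.activeColors τ₂.activeColors := by
  refine Set.disjoint_left.2 fun i hi₁ hi₂ => ?_
  have hi := mem_Icc_of_mem_activeColors h₁ hi₁
  obtain ⟨u, hu⟩ := (exists_color_iff_mem_activeColors h₁ ⟨i, hi⟩).2 hi₁
  obtain ⟨v, hv⟩ := (exists_color_iff_mem_activeColors h₂ ⟨i, hi⟩).2 hi₂
  have huv := h (x := ⟨false, u⟩) (y := ⟨true, v⟩) hu hv
  exact Bool.false_ne_true (congrArg Sigma.fst huv)

end STT

open ColoredGraph in
/-- The automaton guessing a linearization of the graph of a term and keeping track of its summary.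
Its transitions are all those that occur between summaries of finite partial CBMs; that they do not
depend on the witnessing graphs is what makes the automaton sound. -/
noncomputable def cbmAutomaton (A : Architecture) (Alph : Type) (k : ℕ) :
    BUTA (STTLabel (Alph × A.Procs) (Option A.DS)) where
  State := Set (Feature A (Set.Icc 1 k))
  stFintype := Fintype.ofFinite _
  leafT l s := match l with
    | .atom i x => ∃ hi : i ∈ Set.Icc 1 k, (atom x.2 (⟨i, hi⟩ : Set.Icc 1 k)).Admits s
    | _ => False
  unaryT l s t := match l with
    | .add γ i j => ∃ (hi : i ∈ Set.Icc 1 k) (hj : j ∈ Set.Icc 1 k),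
        UnaryStep (fun _ => add γ ⟨i, hi⟩ ⟨j, hj⟩) s t
    | .forget i => ∃ hi : i ∈ Set.Icc 1 k, UnaryStep (fun _ => forget ⟨i, hi⟩) s t
    | _ => False
  binaryT l s₁ s₂ t := match l with
    | .plus => UnionStep s₁ s₂ t
    | _ => False
  accept s := ∀ p o hp hs, Feature.vertex p (o, True, hp, hs) ∉ s

section Runs

variable {A : Architecture} {Alph : Type} {k : ℕ}

theorem cbmAutomaton_card_le (hk : 1 ≤ k) :
    (cbmAutomaton A Alph k).card ≤
      2 ^ (273 * k ^ 2 * (Fintype.card A.Procs + Fintype.card A.DS)) := by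
  have hK : Nat.card (Set.Icc 1 k) = k := by simp
  have hcard : (cbmAutomaton A Alph k).card = 2 ^ Nat.card (Feature A (Set.Icc 1 k)) := by
    have hset : Nat.card (Set (Feature A (Set.Icc 1 k))) = _ := Nat.card_fun
    rw [Nat.card_eq_fintype_card (α := Prop), Fintype.card_prop] at hset
    rw [← hset]
    exact (@Nat.card_eq_fintype_card _ (cbmAutomaton A Alph k).stFintype).symm
  rw [hcard]
  have hle := Feature.card_le A (Set.Icc 1 k) (by simpa)
  exact Nat.pow_le_pow_right two_pos (by simpa [hK] using hle)

open ColoredGraph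

theorem cbmAutomaton_runs_of_admits {τ : STT (Alph × A.Procs) (Option A.DS)} (h : τ.Valid k)
    {s : Set (Feature A (Set.Icc 1 k))} (hs : (τ.coloredGraph h).Admits s) :
    (cbmAutomaton A Alph k).Runs τ.toTree s := by
  induction τ generalizing s with
  | atom i x => exact .leaf ⟨h, hs⟩
  | add γ i j τ ih =>
    obtain ⟨pos, hadd, rfl⟩ := hs
    exact .unary ⟨⟨h.1, h.2.1⟩, ⟨h.2.2.1, h.2.2.2.1⟩, τ.Vertex, τ.finite_vertex,
      τ.coloredGraph h.2.2.2.2, pos, hadd.of_add, hadd, rfl, rfl⟩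
      (ih h.2.2.2.2 ⟨pos, hadd.of_add, rfl⟩)
  | forget i τ ih =>
    obtain ⟨pos, hforget, rfl⟩ := hs
    have hG := hforget.of_forget (STT.coloredGraph_color_unique h.2.2)
      (STT.coloredGraph_color_injective h.2.2)
    exact .unary ⟨⟨h.1, h.2.1⟩, τ.Vertex, τ.finite_vertex, τ.coloredGraph h.2.2, pos, hG, hforget,
      rfl, rfl⟩ (ih h.2.2 ⟨pos, hG, rfl⟩)
  | plus τ₁ τ₂ ih₁ ih₂ =>
    obtain ⟨pos, hunion, rfl⟩ := hs
    exact .binary ⟨Pair τ₁.Vertex τ₂.Vertex, inferInstance, _, pos, hunion, rfl, rfl, rfl⟩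
      (ih₁ h.1 ⟨_, hunion.of_disjointUnion false, rfl⟩)
      (ih₂ h.2.1 ⟨_, hunion.of_disjointUnion true, rfl⟩)

theorem exists_admits_of_cbmAutomaton_runs {t : BTree (STTLabel (Alph × A.Procs) (Option A.DS))}
    {s : (cbmAutomaton A Alph k).State} (hrun : (cbmAutomaton A Alph k).Runs t s) :
    ∃ (τ : STT (Alph × A.Procs) (Option A.DS)) (h : τ.Valid k),
      t = τ.toTree ∧ (τ.coloredGraph h).Admits s := by
  induction hrun with
  | @leaf l s hl =>
    rcases l with ⟨i, x⟩ | _ | _ | _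
    · exact ⟨.atom i x, hl.1, rfl, hl.2⟩
    all_goals exact hl.elim
  | @unary l t s' s hl _ ih =>
    obtain ⟨τ, h, rfl, hs⟩ := ih
    rcases l with _ | ⟨γ, i, j⟩ | ⟨i⟩ | _
    · exact hl.elim
    · obtain ⟨hi, hj, hstep⟩ := hl
      exact ⟨.add γ i j τ, ⟨hi.1, hi.2, hj.1, hj.2, h⟩, rfl, hs.add hstep⟩
    · obtain ⟨hi, hstep⟩ := hl
      exact ⟨.forget i τ, ⟨hi.1, hi.2, h⟩, rfl, hs.forget hstep⟩
    · exact hl.elim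
  | @binary l t₁ t₂ s₁ s₂ s hl _ _ ih₁ ih₂ =>
    obtain ⟨τ₁, h₁, rfl, hs₁⟩ := ih₁
    obtain ⟨τ₂, h₂, rfl, hs₂⟩ := ih₂
    rcases l with _ | _ | _ | _
    any_goals exact hl.elim
    have hadmits := hs₁.disjointUnion_pair hs₂ hl
    have ⟨pos, hunion, _⟩ := hadmits
    exact ⟨.plus τ₁ τ₂,
      ⟨h₁, h₂, STT.disjoint_activeColors_of_color_unique h₁ h₂ hunion.color_unique⟩, rfl, hadmits⟩

theorem cbmAutomaton_accept_summary_iff {V : Type*} {G : ColoredGraph A (Set.Icc 1 k) V}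
    {pos : V → ℕ} :
    (cbmAutomaton A Alph k).accept (G.summary pos) ↔ ∀ v, ¬G.Colored v := by
  constructor
  · intro h v hv
    exact h (G.proc v) _ _ _ ⟨v, rfl, Prod.ext rfl (Prod.ext (eq_true hv) rfl)⟩
  · rintro h p o hp hs ⟨v, -, hv⟩
    exact h v (of_eq_true (congrArg (·.2.1) hv))

theorem cbmAutomaton_accepts_iff {t : BTree (STTLabel (Alph × A.Procs) (Option A.DS))} :
    (cbmAutomaton A Alph k).Accepts t ↔
      ∃ (τ : STT (Alph × A.Procs) (Option A.DS)) (h : τ.Valid k), t = τ.toTree ∧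
        (∀ v, ¬(τ.coloredGraph h).Colored v) ∧ ∃ pos, (τ.coloredGraph h).IsPartialCBM pos := by
  constructor
  · rintro ⟨s, hrun, haccept⟩
    obtain ⟨τ, h, rfl, pos, hpos, rfl⟩ := exists_admits_of_cbmAutomaton_runs hrun
    exact ⟨τ, h, rfl, cbmAutomaton_accept_summary_iff.1 haccept, pos, hpos⟩
  · rintro ⟨τ, h, rfl, hcolor, pos, hpos⟩
    exact ⟨_, cbmAutomaton_runs_of_admits h ⟨pos, hpos, rfl⟩,
      cbmAutomaton_accept_summary_iff.2 hcolor⟩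

end Runs

/-! ### Uncolored partial CBMs are CBMs -/

theorem exists_list_pairwise_lt {V : Type*} [Finite V] {pos : V → ℕ}
    (hpos : Function.Injective pos) (s : Set V) :
    ∃ l : List V, l.Pairwise (pos · < pos ·) ∧ ∀ v, v ∈ l ↔ v ∈ s := by
  let _ : LinearOrder V := LinearOrder.lift' pos hpos
  exact ⟨s.toFinite.toFinset.sort, (Finset.sortedLT_sort _).pairwise, by simp⟩

theorem exists_getElem?_succ_iff {V : Type*} {pos : V → ℕ} {l : List V}
    (hl : l.Pairwise (pos · < pos ·)) {u v : V} (hu : u ∈ l) (hv : v ∈ l) :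
    (∃ n, l[n]? = some u ∧ l[n + 1]? = some v) ↔
      pos u < pos v ∧ ∀ w ∈ l, pos u < pos w → pos v ≤ pos w := by
  have hmono {m n : ℕ} (hm : m < l.length) (hn : n < l.length) : pos l[m] < pos l[n] ↔ m < n := by
    have hlt := List.pairwise_iff_getElem.1 hl
    refine ⟨fun h => ?_, hlt m n hm hn⟩
    by_contra hmn
    obtain rfl | hnm := (not_lt.1 hmn).eq_or_lt
    · exact lt_irrefl _ h
    · exact lt_asymm h (hlt n m hn hm hnm)
  constructor
  · rintro ⟨n, hu, hv⟩
    obtain ⟨hn, rfl⟩ := List.getElem?_eq_some_iff.1 hu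
    obtain ⟨hn', rfl⟩ := List.getElem?_eq_some_iff.1 hv
    refine ⟨(hmono _ _).2 n.lt_succ_self, fun w hw huw => ?_⟩
    obtain ⟨m, hm, rfl⟩ := List.getElem_of_mem hw
    exact not_lt.1 fun hwv => by
      have := (hmono _ _).1 huw
      have := (hmono _ _).1 hwv
      omega
  · rintro ⟨huv, hmin⟩
    obtain ⟨m, hm, rfl⟩ := List.getElem_of_mem hu
    obtain ⟨n, hn, rfl⟩ := List.getElem_of_mem hv
    have hmn : m < n := (hmono _ _).1 huv
    have hle := hmin l[m + 1] (List.getElem_mem _) ((hmono _ _).2 m.lt_succ_self)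
    have hn' : n = m + 1 := by
      have := (hmono _ _).not.1 hle.not_gt
      omega
    exact ⟨m, by simp [hm], by simp [← hn', hn]⟩

namespace ColoredGraph

variable {A : Architecture} {K V : Type*} {G : ColoredGraph A K V} {pos : V → ℕ}

/-- `v` comes right after `u` on the process of `u`. -/
def IsNext (G : ColoredGraph A K V) (pos : V → ℕ) (u v : V) : Prop :=
  G.proc u = G.proc v ∧ pos u < pos v ∧ ∀ w, G.proc u = G.proc w → pos u < pos w → pos v ≤ pos w

/-- The causal order: the transitive closure of the union of all edge relations. -/
def CausalLT (G : ColoredGraph A K V) : V → V → Prop :=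
  Relation.TransGen fun u v => ∃ γ, G.edge γ u v

theorem exists_isNext_left [Finite V] {u v : V} (hp : G.proc u = G.proc v) (huv : pos u < pos v) :
    ∃ w, G.IsNext pos u w := by
  obtain ⟨w, ⟨hpw, huw⟩, hmin⟩ := Set.exists_min_image {w | G.proc u = G.proc w ∧ pos u < pos w}
    pos (Set.toFinite _) ⟨v, hp, huv⟩
  exact ⟨w, hpw, huw, fun x hpx hux => hmin x ⟨hpx, hux⟩⟩

theorem exists_isNext_right [Finite V] {u v : V} (hp : G.proc u = G.proc v)
    (huv : pos u < pos v) : ∃ w, G.IsNext pos w v := by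
  obtain ⟨w, ⟨hpw, hwv⟩, hmax⟩ := Set.exists_max_image {w | G.proc w = G.proc v ∧ pos w < pos v}
    pos (Set.toFinite _) ⟨u, hp, huv⟩
  exact ⟨w, hpw, hwv, fun x hpx hwx => not_lt.1 fun hxv =>
    (hmax x ⟨hpx.symm.trans hpw, hxv⟩).not_gt hwx⟩

theorem IsPartialCBM.edge_none_iff_isNext (hG : G.IsPartialCBM pos)
    (hcolor : ∀ v, ¬G.Colored v) {u v : V} : G.edge none u v ↔ G.IsNext pos u v := by
  constructor
  · exact fun h => ⟨hG.proc_eq h, hG.pos_lt h, fun w hp huw => not_lt.1 (hG.adjacent h hp huw)⟩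
  · rintro ⟨hp, huv, hmin⟩
    obtain ⟨w, huw⟩ := hG.hasSucc hp huv (hcolor u)
    have hvw : pos v = pos w := le_antisymm (hmin w (hG.proc_eq huw) (hG.pos_lt huw))
      (not_lt.1 (hG.adjacent huw hp huv))
    rwa [hG.pos_injective hvw]

theorem IsPartialCBM.pos_lt_of_causalLT (hG : G.IsPartialCBM pos) {u v : V}
    (h : G.CausalLT u v) : pos u < pos v := by
  induction h with
  | single h => exact hG.pos_lt h.choose_spec
  | tail _ h ih => exact ih.trans (hG.pos_lt h.choose_spec)

theorem IsPartialCBM.causalLT_iff_pos_lt (hG : G.IsPartialCBM pos) (hcolor : ∀ v, ¬G.Colored v)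
    {u v : V} (hp : G.proc u = G.proc v) : G.CausalLT u v ↔ pos u < pos v := by
  refine ⟨hG.pos_lt_of_causalLT, fun huv => ?_⟩
  induction hn : pos v - pos u using Nat.strong_induction_on generalizing u with
  | _ n ih =>
    obtain ⟨w, huw⟩ := hG.hasSucc hp huv (hcolor u)
    have hlt := hG.pos_lt huw
    obtain heq | hwv := (not_lt.1 (hG.adjacent huw hp huv)).eq_or_lt
    · exact .single ⟨none, hG.pos_injective heq ▸ huw⟩
    · exact .head ⟨none, huw⟩ (ih _ (by omega) ((hG.proc_eq huw).symm.trans hp) hwv rfl)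

/-- The vertex map `f` identifies `G`, up to colors and letters, with the labeled graph given by
`dom`, `lab` and `edge` in the format of `IsCBMGraph`. -/
structure Presents {Alph W : Type} (G : ColoredGraph A K V) (f : V → W) (dom : Set W)
    (lab : W → Option (Alph × A.Procs)) (edge : Option A.DS → W → W → Prop) : Prop where
  injective : Function.Injective f
  mem_dom_iff : ∀ {x}, x ∈ dom ↔ ∃ v, f v = x
  exists_lab_eq : ∀ v, ∃ a, lab (f v) = some (a, G.proc v)
  edge_iff : ∀ {γ x y}, edge γ x y ↔ ∃ u v, f u = x ∧ f v = y ∧ G.edge γ u v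

namespace Presents

variable {Alph W : Type} {f : V → W} {dom : Set W} {lab : W → Option (Alph × A.Procs)}
  {edge : Option A.DS → W → W → Prop}

theorem edge_map_iff (hf : G.Presents f dom lab edge) {γ : Option A.DS} {u v : V} :
    edge γ (f u) (f v) ↔ G.edge γ u v := by
  refine ⟨fun h => ?_, fun h => hf.edge_iff.2 ⟨u, v, rfl, rfl, h⟩⟩
  obtain ⟨u', v', hu, hv, h⟩ := hf.edge_iff.1 h
  rwa [← hf.injective hu, ← hf.injective hv]

theorem exists_lab_eq_iff (hf : G.Presents f dom lab edge) {v : V} {p : A.Procs} :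
    (∃ a, lab (f v) = some (a, p)) ↔ G.proc v = p := by
  obtain ⟨a, ha⟩ := hf.exists_lab_eq v
  simp [ha]

theorem transGen_map_iff (hf : G.Presents f dom lab edge) {u v : V} :
    Relation.TransGen (fun x y => ∃ γ, edge γ x y) (f u) (f v) ↔ G.CausalLT u v := by
  constructor
  · intro h
    generalize hy : f v = y at h
    induction h generalizing v with
    | single h =>
      obtain ⟨γ, h⟩ := h
      exact .single ⟨γ, hf.edge_map_iff.1 (hy ▸ h)⟩
    | tail _ h ih =>
      obtain ⟨γ, h⟩ := h
      obtain ⟨w, v', hw, hv', -⟩ := hf.edge_iff.1 h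
      subst hw hy
      exact .tail (ih rfl) ⟨γ, hf.edge_map_iff.1 h⟩
  · exact fun h => h.lift f fun _ _ ⟨γ, h⟩ => ⟨γ, hf.edge_map_iff.2 h⟩

theorem exists_list_of_isPartialCBM [Finite V] (hf : G.Presents f dom lab edge)
    (hcolor : ∀ v, ¬G.Colored v) (hG : G.IsPartialCBM pos) (p : A.Procs) :
    ∃ l : List W, l.Nodup ∧ (∀ x, x ∈ l ↔ x ∈ dom ∧ ∃ a, lab x = some (a, p)) ∧
      ∀ x y, x ∈ l → y ∈ l → (edge none x y ↔ ∃ n, l[n]? = some x ∧ l[n + 1]? = some y) := by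
  obtain ⟨l, hsorted, hmem⟩ := exists_list_pairwise_lt hG.pos_injective {v | G.proc v = p}
  have hnodup : l.Nodup := hsorted.imp fun h he => h.ne (congrArg pos he)
  refine ⟨l.map f, hnodup.map hf.injective, fun x => ?_, fun x y hx hy => ?_⟩
  · rw [hf.mem_dom_iff, List.mem_map]
    constructor
    · rintro ⟨v, hv, rfl⟩
      exact ⟨⟨v, rfl⟩, hf.exists_lab_eq_iff.2 ((hmem v).1 hv)⟩
    · rintro ⟨⟨v, rfl⟩, hv⟩
      exact ⟨v, (hmem v).2 (hf.exists_lab_eq_iff.1 hv), rfl⟩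
  · obtain ⟨u, hu, rfl⟩ := List.mem_map.1 hx
    obtain ⟨v, hv, rfl⟩ := List.mem_map.1 hy
    have hpu : G.proc u = p := (hmem u).1 hu
    have hpv : G.proc v = p := (hmem v).1 hv
    simp only [List.getElem?_map, Option.map_eq_some_iff, hf.injective.eq_iff, exists_eq_right]
    rw [hf.edge_map_iff, hG.edge_none_iff_isNext hcolor, exists_getElem?_succ_iff hsorted hu hv]
    simp [IsNext, hmem, hpu, hpv, eq_comm]

theorem disjoint_of_isPartialCBM (hf : G.Presents f dom lab edge) (hG : G.IsPartialCBM pos)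
    {d₁ d₂ : A.DS} {x₁ y₁ x₂ y₂ : W} (hxy₁ : edge (some d₁) x₁ y₁) (hxy₂ : edge (some d₂) x₂ y₂)
    (hne : ¬(d₁ = d₂ ∧ x₁ = x₂ ∧ y₁ = y₂)) : x₁ ≠ x₂ ∧ x₁ ≠ y₂ ∧ y₁ ≠ x₂ ∧ y₁ ≠ y₂ := by
  obtain ⟨e₁, f₁, rfl, rfl, h₁⟩ := hf.edge_iff.1 hxy₁
  obtain ⟨e₂, f₂, rfl, rfl, h₂⟩ := hf.edge_iff.1 hxy₂
  have hmeet := mt (hG.compatible h₁ h₂).eq_of_meet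
  simp only [ne_eq, hf.injective.eq_iff, not_or] at hne hmeet ⊢
  exact hmeet hne

theorem lifo_of_isPartialCBM (hf : G.Presents f dom lab edge) (hcolor : ∀ v, ¬G.Colored v)
    (hG : G.IsPartialCBM pos) {d : A.DS} (hd : A.kind d = DSKind.stack) {x₁ y₁ x₂ y₂ : W}
    (hxy₁ : edge (some d) x₁ y₁) (hxy₂ : edge (some d) x₂ y₂)
    (hxx : Relation.TransGen (fun x y => ∃ γ, edge γ x y) x₁ x₂)
    (hxy : Relation.TransGen (fun x y => ∃ γ, edge γ x y) x₂ y₁) :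
    Relation.TransGen (fun x y => ∃ γ, edge γ x y) y₂ y₁ := by
  obtain ⟨e₁, f₁, rfl, rfl, h₁⟩ := hf.edge_iff.1 hxy₁
  obtain ⟨e₂, f₂, rfl, rfl, h₂⟩ := hf.edge_iff.1 hxy₂
  have hee := hG.pos_lt_of_causalLT (hf.transGen_map_iff.1 hxx)
  have hef := hG.pos_lt_of_causalLT (hf.transGen_map_iff.1 hxy)
  rw [hf.transGen_map_iff, hG.causalLT_iff_pos_lt hcolor (by rw [hG.reader h₁, hG.reader h₂])]
  exact (hG.compatible h₁ h₂).lifo rfl hd hee hef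

theorem fifo_of_isPartialCBM (hf : G.Presents f dom lab edge) (hcolor : ∀ v, ¬G.Colored v)
    (hG : G.IsPartialCBM pos) {d : A.DS} (hd : A.kind d = DSKind.queue) {x₁ y₁ x₂ y₂ : W}
    (hxy₁ : edge (some d) x₁ y₁) (hxy₂ : edge (some d) x₂ y₂)
    (hxx : Relation.TransGen (fun x y => ∃ γ, edge γ x y) x₁ x₂) :
    Relation.TransGen (fun x y => ∃ γ, edge γ x y) y₁ y₂ := by
  obtain ⟨e₁, f₁, rfl, rfl, h₁⟩ := hf.edge_iff.1 hxy₁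
  obtain ⟨e₂, f₂, rfl, rfl, h₂⟩ := hf.edge_iff.1 hxy₂
  have hee := hG.pos_lt_of_causalLT (hf.transGen_map_iff.1 hxx)
  rw [hf.transGen_map_iff, hG.causalLT_iff_pos_lt hcolor (by rw [hG.reader h₁, hG.reader h₂])]
  exact (hG.compatible h₁ h₂).fifo rfl hd hee

theorem isCBMGraph_of_isPartialCBM [Finite V] (hf : G.Presents f dom lab edge)
    (hcolor : ∀ v, ¬G.Colored v) (hG : G.IsPartialCBM pos) : IsCBMGraph A Alph dom lab edge := by
  refine ⟨?_, ?_, hf.exists_list_of_isPartialCBM hcolor hG, ?_, ?_,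
    fun _ _ _ _ _ _ => hf.disjoint_of_isPartialCBM hG, ?_,
    fun _ hd _ _ _ _ => hf.lifo_of_isPartialCBM hcolor hG hd,
    fun _ hd _ _ _ _ => hf.fifo_of_isPartialCBM hcolor hG hd⟩
  · intro x hx
    obtain ⟨v, rfl⟩ := hf.mem_dom_iff.1 hx
    exact ⟨_, (hf.exists_lab_eq v).choose_spec⟩
  · intro γ x y hxy
    obtain ⟨u, v, hu, hv, -⟩ := hf.edge_iff.1 hxy
    exact ⟨hf.mem_dom_iff.2 ⟨u, hu⟩, hf.mem_dom_iff.2 ⟨v, hv⟩⟩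
  · intro x y hxy
    obtain ⟨u, v, rfl, rfl, huv⟩ := hf.edge_iff.1 hxy
    obtain ⟨a, ha⟩ := hf.exists_lab_eq u
    obtain ⟨b, hb⟩ := hf.exists_lab_eq v
    exact ⟨a, b, G.proc v, hG.proc_eq huv ▸ ha, hb⟩
  · intro d x y hxy
    obtain ⟨u, v, rfl, rfl, huv⟩ := hf.edge_iff.1 hxy
    obtain ⟨a, ha⟩ := hf.exists_lab_eq u
    obtain ⟨b, hb⟩ := hf.exists_lab_eq v
    exact ⟨a, b, hG.writer huv ▸ ha, hG.reader huv ▸ hb⟩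
  · intro x hxx
    obtain ⟨_, ⟨γ, hx⟩, -⟩ := Relation.TransGen.head'_iff.1 hxx
    obtain ⟨v, _, rfl, -, -⟩ := hf.edge_iff.1 hx
    exact lt_irrefl _ (hG.pos_lt_of_causalLT (hf.transGen_map_iff.1 hxx))

theorem exists_list_pairwise_causalLT (hf : G.Presents f dom lab edge)
    (h : IsCBMGraph A Alph dom lab edge) (p : A.Procs) :
    ∃ l : List V, l.Pairwise G.CausalLT ∧ (∀ v, v ∈ l ↔ G.proc v = p) ∧
      ∀ u ∈ l, ∀ v ∈ l, (G.edge none u v ↔ ∃ n, l[n]? = some u ∧ l[n + 1]? = some v) := by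
  obtain ⟨m, -, hmem, hedge⟩ := h.2.2.1 p
  obtain ⟨l, rfl⟩ : m ∈ Set.range (List.map f) := by
    rw [Set.range_list_map]
    exact fun x hx => hf.mem_dom_iff.1 ((hmem x).1 hx).1
  have hedge' {u v : V} (hu : u ∈ l) (hv : v ∈ l) :
      G.edge none u v ↔ ∃ n, l[n]? = some u ∧ l[n + 1]? = some v := by
    simpa [hf.edge_map_iff, hf.injective.eq_iff] using
      hedge (f u) (f v) (List.mem_map_of_mem hu) (List.mem_map_of_mem hv)
  refine ⟨l, ?_, fun v => ?_, fun u hu v hv => hedge' hu hv⟩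
  · have : Trans G.CausalLT G.CausalLT G.CausalLT := ⟨Relation.TransGen.trans⟩
    refine List.isChain_iff_pairwise.1 (List.isChain_iff_getElem.2 fun n hn => ?_)
    exact .single ⟨none, (hedge' (List.getElem_mem _) (List.getElem_mem _)).2
      ⟨n, by simp, by simp⟩⟩
  · have := hmem (f v)
    rwa [List.mem_map_of_injective hf.injective, hf.mem_dom_iff, hf.exists_lab_eq_iff,
      and_iff_right ⟨v, rfl⟩] at this

theorem proc_eq_writer_reader (hf : G.Presents f dom lab edge)
    (h : IsCBMGraph A Alph dom lab edge) {d : A.DS} {u v : V} (huv : G.edge (some d) u v) :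
    G.proc u = A.Writer d ∧ G.proc v = A.Reader d := by
  obtain ⟨a, b, ha, hb⟩ := h.2.2.2.2.1 d _ _ (hf.edge_map_iff.2 huv)
  exact ⟨hf.exists_lab_eq_iff.1 ⟨a, ha⟩, hf.exists_lab_eq_iff.1 ⟨b, hb⟩⟩

theorem causalLT_of_pos_lt (hf : G.Presents f dom lab edge)
    (h : IsCBMGraph A Alph dom lab edge) (hpos : ∀ {u v}, G.CausalLT u v → pos u < pos v)
    {u v : V} (hp : G.proc u = G.proc v) (huv : pos u < pos v) :
    G.CausalLT u v := by
  obtain ⟨l, hl, hmem, -⟩ := hf.exists_list_pairwise_causalLT h (G.proc v)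
  have : Std.Symm fun u v => G.CausalLT u v ∨ G.CausalLT v u := ⟨fun _ _ => Or.symm⟩
  have htotal : l.Pairwise fun u v => G.CausalLT u v ∨ G.CausalLT v u := hl.imp Or.inl
  have huv_or := htotal.forall ((hmem u).2 hp) ((hmem v).2 rfl) (ne_of_apply_ne pos huv.ne)
  exact huv_or.resolve_right fun hvu => lt_asymm huv (hpos hvu)

theorem edge_none_iff_isNext (hf : G.Presents f dom lab edge)
    (h : IsCBMGraph A Alph dom lab edge) (hpos : ∀ {u v}, G.CausalLT u v → pos u < pos v)
    {u v : V} : G.edge none u v ↔ G.IsNext pos u v := by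
  obtain ⟨l, hl, hmem, hedge⟩ := hf.exists_list_pairwise_causalLT h (G.proc v)
  have hnext (hp : G.proc u = G.proc v) : G.edge none u v ↔ G.IsNext pos u v := by
    rw [hedge u ((hmem u).2 hp) v ((hmem v).2 rfl),
      exists_getElem?_succ_iff (hl.imp hpos) ((hmem u).2 hp) ((hmem v).2 rfl)]
    simp [IsNext, hmem, hp, eq_comm]
  refine ⟨fun huv => (hnext ?_).1 huv, fun huv => (hnext huv.1).2 huv⟩
  obtain ⟨a, b, p, ha, hb⟩ := h.2.2.2.1 _ _ (hf.edge_map_iff.2 huv)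
  exact (hf.exists_lab_eq_iff.1 ⟨a, ha⟩).trans (hf.exists_lab_eq_iff.1 ⟨b, hb⟩).symm

theorem compatible_of_isCBMGraph (hf : G.Presents f dom lab edge)
    (h : IsCBMGraph A Alph dom lab edge) (hpos : ∀ {u v}, G.CausalLT u v → pos u < pos v)
    {d₁ d₂ : A.DS} {e₁ f₁ e₂ f₂ : V} (h₁ : G.edge (some d₁) e₁ f₁)
    (h₂ : G.edge (some d₂) e₂ f₂) : A.Compatible pos d₁ e₁ f₁ d₂ e₂ f₂ := by
  have ⟨hW₁, hR₁⟩ := hf.proc_eq_writer_reader h h₁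
  have ⟨hW₂, hR₂⟩ := hf.proc_eq_writer_reader h h₂
  have hlt {u v : V} (hp : G.proc u = G.proc v) (huv : pos u < pos v) :=
    hf.transGen_map_iff.2 (hf.causalLT_of_pos_lt h hpos hp huv)
  obtain ⟨-, -, -, -, -, hdisj, -, hlifo, hfifo⟩ := h
  have h₁' := hf.edge_map_iff.2 h₁
  have h₂' := hf.edge_map_iff.2 h₂
  constructor
  · refine fun hmeet => by_contra fun hne => ?_
    have := hdisj d₁ d₂ _ _ _ _ h₁' h₂' (by simpa [hf.injective.eq_iff] using hne)
    simp only [ne_eq, hf.injective.eq_iff] at this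
    tauto
  · rintro rfl hd hee hef
    exact hpos (hf.transGen_map_iff.1 (hlifo d₁ hd _ _ _ _ h₁' h₂' (hlt (hW₁.trans hW₂.symm) hee)
      (hlt (by rw [hW₂, hR₁, A.stack_wr d₁ hd]) hef)))
  · rintro rfl hd hee
    exact hpos (hf.transGen_map_iff.1 (hfifo d₁ hd _ _ _ _ h₁' h₂' (hlt (hW₁.trans hW₂.symm) hee)))

theorem exists_isPartialCBM_of_isCBMGraph [Finite V] (hf : G.Presents f dom lab edge)
    (hcolor : ∀ v, ¬G.Colored v) (h : IsCBMGraph A Alph dom lab edge) :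
    ∃ pos, G.IsPartialCBM pos := by
  have : IsStrictOrder V G.CausalLT :=
    { irrefl := fun v hv => h.2.2.2.2.2.2.1 (f v) (hf.transGen_map_iff.2 hv)
      trans := fun _ _ _ => .trans }
  obtain ⟨pos, hinj, hpos⟩ := exists_injective_nat_of_isStrictOrder G.CausalLT
  have hnext {u v : V} := hf.edge_none_iff_isNext h (hpos _ _) (u := u) (v := v)
  exact ⟨pos,
    { pos_injective := hinj
      color_unique := fun hc => (hcolor _ ⟨_, hc⟩).elim
      color_injective := fun hc => (hcolor _ ⟨_, hc⟩).elim
      pos_lt := fun huv => hpos _ _ (.single ⟨_, huv⟩)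
      proc_eq := fun huv => (hnext.1 huv).1
      adjacent := fun huv hp huw => ((hnext.1 huv).2.2 _ hp huw).not_gt
      hasPred := fun hp huv _ => (exists_isNext_right hp huv).imp fun _ => hnext.2
      hasSucc := fun hp huv _ => (exists_isNext_left hp huv).imp fun _ => hnext.2
      writer := fun huv => (hf.proc_eq_writer_reader h huv).1
      reader := fun huv => (hf.proc_eq_writer_reader h huv).2
      compatible := hf.compatible_of_isCBMGraph h (hpos _ _) }⟩

theorem isCBMGraph_iff_exists_isPartialCBM [Finite V] (hf : G.Presents f dom lab edge)
    (hcolor : ∀ v, ¬G.Colored v) :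
    IsCBMGraph A Alph dom lab edge ↔ ∃ pos, G.IsPartialCBM pos :=
  ⟨hf.exists_isPartialCBM_of_isCBMGraph hcolor,
    fun ⟨_, hG⟩ => hf.isCBMGraph_of_isPartialCBM hcolor hG⟩

end Presents

end ColoredGraph

/-! ### Positions of vertices in a term -/

namespace STT

open ColoredGraph

/-- The path from the root of a term to the leaf introducing a vertex, which is how `STT.vertices`
represents that vertex. -/
def position {Vl El : Type} : ∀ τ : STT Vl El, τ.Vertex → List Bool
  | atom _ _, _ => []
  | add _ _ _ τ, v => false :: position τ v
  | forget _ τ, v => false :: position τ v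
  | plus τ₁ _, ⟨false, v⟩ => false :: position τ₁ v
  | plus _ τ₂, ⟨true, v⟩ => true :: position τ₂ v

theorem position_injective {Vl El : Type} : ∀ τ : STT Vl El, Function.Injective τ.position
  | atom _ _ => fun _ _ _ => rfl
  | add _ _ _ τ => (List.cons_injective (a := false)).comp τ.position_injective
  | forget _ τ => (List.cons_injective (a := false)).comp τ.position_injective
  | plus τ₁ τ₂ => by
    rintro ⟨_ | _, u⟩ ⟨_ | _, v⟩ h
    · exact congrArg _ (τ₁.position_injective (List.cons_injective h))
    · exact (Bool.false_ne_true (List.cons.inj h).1).elim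
    · exact (Bool.false_ne_true (List.cons.inj h).1.symm).elim
    · exact congrArg _ (τ₂.position_injective (List.cons_injective h))

theorem chi_eq_none_iff {Vl El : Type} (τ : STT Vl El) (i : ℕ) :
    τ.chi i = none ↔ i ∉ τ.activeColors := by
  induction τ with
  | atom j a => simp [chi, activeColors]
  | add γ j l τ ih => simp [chi, activeColors, ih]
  | forget j τ ih => by_cases hij : i = j <;> simp [chi, activeColors, hij, ih]
  | plus τ₁ τ₂ ih₁ ih₂ =>
    rw [chi, activeColors, Set.mem_union, not_or, ← ih₁, ← ih₂]
    cases τ₁.chi i <;> simp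

theorem exists_position_eq_of_mem_vertices {Vl El : Type} {τ : STT Vl El} {p : List Bool}
    (hp : p ∈ τ.vertices) : ∃ v, τ.position v = p := by
  induction τ generalizing p with
  | atom i a =>
    match p, hp with
    | [], _ => exact ⟨(), rfl⟩
  | add γ i j τ ih =>
    match p, hp with
    | false :: _, hp => exact (ih hp).imp fun _ => congrArg _
  | forget i τ ih =>
    match p, hp with
    | false :: _, hp => exact (ih hp).imp fun _ => congrArg _
  | plus τ₁ τ₂ ih₁ ih₂ =>
    match p, hp with
    | false :: _, hp => exact (ih₁ hp).elim fun v hv => ⟨⟨false, v⟩, congrArg _ hv⟩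
    | true :: _, hp => exact (ih₂ hp).elim fun v hv => ⟨⟨true, v⟩, congrArg _ hv⟩

variable {A : Architecture} {Alph : Type} {k : ℕ}

theorem exists_vlabel_position_eq : ∀ {τ : STT (Alph × A.Procs) (Option A.DS)} (h : τ.Valid k)
    (v : τ.Vertex), ∃ a, τ.vlabel (τ.position v) = some (a, (τ.coloredGraph h).proc v)
  | atom _ x, _, _ => ⟨x.1, rfl⟩
  | add _ _ _ _, h, v => exists_vlabel_position_eq h.2.2.2.2 v
  | forget _ _, h, v => exists_vlabel_position_eq h.2.2 v
  | plus _ _, h, ⟨false, v⟩ => exists_vlabel_position_eq h.1 v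
  | plus _ _, h, ⟨true, v⟩ => exists_vlabel_position_eq h.2.1 v

theorem chi_eq_some_position {τ : STT (Alph × A.Procs) (Option A.DS)} (h : τ.Valid k)
    {c : Set.Icc 1 k} {v : τ.Vertex} (hc : (τ.coloredGraph h).color c v) :
    τ.chi c = some (τ.position v) := by
  induction τ with
  | atom i x => exact if_pos (congrArg Subtype.val hc)
  | add γ i j τ ih => exact congrArg (Option.map _) (ih h.2.2.2.2 hc)
  | forget i τ ih =>
    rw [chi, if_neg (Subtype.coe_ne_coe.2 hc.1), ih h.2.2 hc.2]
    rfl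
  | plus τ₁ τ₂ ih₁ ih₂ =>
    rcases v with ⟨_ | _, v⟩
    · rw [chi, ih₁ h.1 hc]
      rfl
    · have hactive := (exists_color_iff_mem_activeColors h.2.1 c).1 ⟨v, hc⟩
      rw [chi, (τ₁.chi_eq_none_iff c).2 (Set.disjoint_right.1 h.2.2 hactive), ih₂ h.2.1 hc]
      rfl

theorem chi_eq_some_iff {τ : STT (Alph × A.Procs) (Option A.DS)} (h : τ.Valid k)
    {c : Set.Icc 1 k} {p : List Bool} :
    τ.chi c = some p ↔ ∃ v, τ.position v = p ∧ (τ.coloredGraph h).color c v := by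
  refine ⟨fun hp => ?_, fun ⟨v, hv, hc⟩ => hv ▸ chi_eq_some_position h hc⟩
  have hactive : c.1 ∈ τ.activeColors := by
    by_contra hc
    simp [(τ.chi_eq_none_iff c).2 hc] at hp
  obtain ⟨v, hv⟩ := (exists_color_iff_mem_activeColors h c).2 hactive
  exact ⟨v, Option.some.inj ((chi_eq_some_position h hv).symm.trans hp), hv⟩

theorem edgeRel_position {τ : STT (Alph × A.Procs) (Option A.DS)} (h : τ.Valid k)
    {γ : Option A.DS} {u v : τ.Vertex} (huv : (τ.coloredGraph h).edge γ u v) :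
    τ.edgeRel γ (τ.position u) (τ.position v) := by
  induction τ with
  | atom i x => exact huv
  | add γ' i j τ ih =>
    rcases huv with huv | ⟨rfl, hu, hv⟩
    · exact .inl ⟨_, _, rfl, rfl, ih _ huv⟩
    · exact .inr ⟨rfl, _, _, chi_eq_some_position _ hu, chi_eq_some_position _ hv, rfl, rfl⟩
  | forget i τ ih => exact ⟨_, _, rfl, rfl, ih _ huv⟩
  | plus τ₁ τ₂ ih₁ ih₂ =>
    obtain ⟨_ | _, u, v, rfl, rfl, huv⟩ := huv
    · exact .inl ⟨_, _, rfl, rfl, ih₁ h.1 huv⟩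
    · exact .inr ⟨_, _, rfl, rfl, ih₂ h.2.1 huv⟩

theorem exists_edge_of_edgeRel {τ : STT (Alph × A.Procs) (Option A.DS)} (h : τ.Valid k)
    {γ : Option A.DS} {p q : List Bool} (hpq : τ.edgeRel γ p q) :
    ∃ u v, τ.position u = p ∧ τ.position v = q ∧ (τ.coloredGraph h).edge γ u v := by
  induction τ generalizing p q with
  | atom i x => exact hpq.elim
  | add γ' i j τ ih =>
    rcases hpq with ⟨p, q, rfl, rfl, hpq⟩ | ⟨rfl, p, q, hp, hq, rfl, rfl⟩
    · obtain ⟨u, v, rfl, rfl, huv⟩ := ih h.2.2.2.2 hpq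
      exact ⟨u, v, rfl, rfl, .inl huv⟩
    · obtain ⟨u, rfl, hu⟩ := (chi_eq_some_iff h.2.2.2.2 (c := ⟨i, h.1, h.2.1⟩)).1 hp
      obtain ⟨v, rfl, hv⟩ :=
        (chi_eq_some_iff h.2.2.2.2 (c := ⟨j, h.2.2.1, h.2.2.2.1⟩)).1 hq
      exact ⟨u, v, rfl, rfl, .inr ⟨rfl, hu, hv⟩⟩
  | forget i τ ih =>
    obtain ⟨p, q, rfl, rfl, hpq⟩ := hpq
    obtain ⟨u, v, rfl, rfl, huv⟩ := ih h.2.2 hpq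
    exact ⟨u, v, rfl, rfl, huv⟩
  | plus τ₁ τ₂ ih₁ ih₂ =>
    rcases hpq with ⟨p, q, rfl, rfl, hpq⟩ | ⟨p, q, rfl, rfl, hpq⟩
    · obtain ⟨u, v, rfl, rfl, huv⟩ := ih₁ h.1 hpq
      exact ⟨⟨false, u⟩, ⟨false, v⟩, rfl, rfl, false, u, v, rfl, rfl, huv⟩
    · obtain ⟨u, v, rfl, rfl, huv⟩ := ih₂ h.2.1 hpq
      exact ⟨⟨true, u⟩, ⟨true, v⟩, rfl, rfl, true, u, v, rfl, rfl, huv⟩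

theorem presents_position {τ : STT (Alph × A.Procs) (Option A.DS)} (h : τ.Valid k) :
    (τ.coloredGraph h).Presents τ.position τ.vertices τ.vlabel τ.edgeRel where
  injective := τ.position_injective
  mem_dom_iff := by
    refine ⟨exists_position_eq_of_mem_vertices, ?_⟩
    rintro ⟨v, rfl⟩
    obtain ⟨a, ha⟩ := exists_vlabel_position_eq h v
    exact Option.isSome_of_mem ha
  exists_lab_eq := exists_vlabel_position_eq h
  edge_iff := ⟨exists_edge_of_edgeRel h,
    fun ⟨_, _, hu, hv, huv⟩ => hu ▸ hv ▸ edgeRel_position h huv⟩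

theorem forall_chi_eq_none_iff {τ : STT (Alph × A.Procs) (Option A.DS)} (h : τ.Valid k) :
    (∀ i, τ.chi i = none) ↔ ∀ v, ¬(τ.coloredGraph h).Colored v := by
  simp only [chi_eq_none_iff]
  constructor
  · rintro hactive v ⟨c, hc⟩
    exact hactive c ((exists_color_iff_mem_activeColors h c).1 ⟨v, hc⟩)
  · intro hcolor i hi
    obtain ⟨v, hv⟩ := (exists_color_iff_mem_activeColors h
      ⟨i, mem_Icc_of_mem_activeColors h hi⟩).2 hi
    exact hcolor v ⟨_, hv⟩

end STT

theorem cbm_stt_automaton_general :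
    ∃ c : ℕ, ∀ (A : Architecture) (Alph : Type) (k : ℕ), 1 ≤ k →
      ∃ Aut : BUTA (STTLabel (Alph × A.Procs) (Option A.DS)),
        Aut.card ≤ 2 ^ (c * k ^ 2 * (Fintype.card A.Procs + Fintype.card A.DS)) ∧
        ∀ t : BTree (STTLabel (Alph × A.Procs) (Option A.DS)),
          (Aut.Accepts t ↔ ∃ τ : STT (Alph × A.Procs) (Option A.DS),
            τ.Valid k ∧ t = τ.toTree ∧ (∀ i, τ.chi i = none) ∧
            IsCBMGraph A Alph τ.vertices τ.vlabel τ.edgeRel) := by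
  refine ⟨273, fun A Alph k hk => ⟨cbmAutomaton A Alph k, cbmAutomaton_card_le hk, fun t => ?_⟩⟩
  rw [cbmAutomaton_accepts_iff]
  refine exists_congr fun τ => ?_
  rw [← exists_prop]
  refine exists_congr fun h => and_congr_right fun _ => ?_
  rw [STT.forall_chi_eq_none_iff h]
  exact and_congr_right fun hcolor =>
    ((STT.presents_position h).isCBMGraph_iff_exists_isPartialCBM hcolor).symm

/-- There is a constant `c` such that for every architecture,
finite alphabet, and `k ≥ 1`, there is a nondeterministic bottom-up tree
automaton with at most `2^(c·k²·(|Procs|+|DS|))` states accepting a binary tree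
over `Λ^k` iff it is a valid `k`-STT with empty coloring domain whose graph
`G_τ` is a CBM over `(A, Alph)`. -/
theorem cbm_stt_automaton :
    ∃ c : ℕ, ∀ (A : Architecture) (Alph : Type), Fintype Alph → ∀ k : ℕ, 1 ≤ k →
      ∃ Aut : BUTA (STTLabel (Alph × A.Procs) (Option A.DS)),
        Aut.card ≤ 2 ^ (c * k ^ 2 * (Fintype.card A.Procs + Fintype.card A.DS)) ∧
        ∀ t : BTree (STTLabel (Alph × A.Procs) (Option A.DS)),
          (Aut.Accepts t ↔ ∃ τ : STT (Alph × A.Procs) (Option A.DS),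
            τ.Valid k ∧ t = τ.toTree ∧ (∀ i, τ.chi i = none) ∧
            IsCBMGraph A Alph τ.vertices τ.vlabel τ.edgeRel) := by
  obtain ⟨c, hc⟩ := cbm_stt_automaton_general
  exact ⟨c, fun A Alph _ => hc A Alph⟩
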